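/- Let α ∈ (1,2) and let X = {X(t)}_{t∈[0,1]} be a symmetric α-stable process with spectral representation (f,m) over a finite measure space (S,𝒮,m). Assume there exist β_1, β_2 > 1/2, p_1 > α, p_2 > α/2 and increasing continuous functions F_1, F_2 : [0,1] → ℝ such that for all 0 ≤ t_1 ≤ t ≤ t_2 ≤ 1: ∫_S |f(t_2,s) − f(t_1,s)|^{p_1} m(ds) ≤ |F_1(t_2) − F_1(t_1)|^{β_1} and ∫_S |(f(t,s) − f(t_1,s))(f(t_2,s) − f(t,s))|^{p_2} m(ds) ≤ |F_2(t_2) − F_2(t_1)|^{2β_2}. Then X has a modification all of whose sample paths are càdlàg on [0,1]. -/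

import Mathlib

open MeasureTheory ProbabilityTheory Filter Topology Set
open scoped ENNReal

noncomputable section

/-- A function on `[0,1]` is càdlàg: right-continuous with left limits at every point. -/
def Cadlag {E : Type*} [TopologicalSpace E] (f : unitInterval → E) : Prop :=
  (∀ t, Filter.Tendsto f (nhdsWithin t (Set.Ioi t)) (nhds (f t))) ∧
    ∀ t, ∃ l, Filter.Tendsto f (nhdsWithin t (Set.Iio t)) (nhds l)

/-!
The process is the weak limit of normalised sums over `N` independent points drawn from a symmetric
window of mass `N` for the intensity `dr ⊗ m`, each point `(r, s)` contributing the jump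
`r |r| ^ (-1/α - 1) f(t, s)`. Apart from an event of probability `O(r₀)` all points have `|r| ≥ r₀`,
and then the jumps have moments of every order above `α`. Two adjacent increments can both be large
either because one point is responsible for both, or because two different points are, or because
many small jumps conspire; the first case is controlled by the `p₂`-moment of the product of the
increments of `f`, the second by the square of their `p₁`-moments, and the last one by a Chernoff
bound. The resulting estimate is summable along the dyadic subdivisions, once a time change has made
`F₁` and `F₂` Lipschitz, so Borel–Cantelli shows that from some generation on one of any two
adjacent dyadic increments is small. A function on the dyadics with this property has one-sided
limits. Finally, `f` being right-continuous in `L^α`, the right limits agree almost surely with the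
process.
-/

section AdjacentIncrements

variable {ι E : Type*} [PseudoMetricSpace E]

/-- Of the increments of `x` over two adjacent intervals with endpoints in `V`, one always has
length at most `η`. This is the condition bounding the càdlàg modulus `w''` of Billingsley. -/
def AdjacentIncrementsLE [LE ι] (x : ι → E) (η : ℝ) (V : Set ι) : Prop :=
  ∀ ⦃r⦄, r ∈ V → ∀ ⦃s⦄, s ∈ V → ∀ ⦃t⦄, t ∈ V → r ≤ s → s ≤ t →
    dist (x r) (x s) ≤ η ∨ dist (x s) (x t) ≤ η

lemma AdjacentIncrementsLE.comp_ofDual [LE ι] {x : ι → E} {η : ℝ} {V : Set ι}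
    (h : AdjacentIncrementsLE x η V) :
    AdjacentIncrementsLE (x ∘ OrderDual.ofDual) η (OrderDual.ofDual ⁻¹' V) := by
  intro r hr s hs t ht hrs hst
  simp only [Function.comp_apply]
  rw [or_comm, dist_comm, dist_comm (x (OrderDual.ofDual r))]
  exact h ht hs hr hst hrs

lemma cauchy_map_of_adjacentIncrementsLE [LinearOrder ι] {x : ι → E} {l : Filter ι} [l.NeBot]
    (hx : ∀ η > 0, ∃ V ∈ l, AdjacentIncrementsLE x η V)
    (hl : ∀ᶠ c in l, ∀ᶠ d in l, d < c) : Cauchy (map x l) := by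
  rw [Metric.cauchy_iff]
  refine ⟨inferInstance, fun ε hε => ?_⟩
  obtain ⟨V, hV, hVx⟩ := hx (ε / 3) (by positivity)
  suffices ∃ W ∈ l, ∀ c ∈ W, ∀ d ∈ W, c ≤ d → dist (x c) (x d) < ε by
    obtain ⟨W, hW, hWx⟩ := this
    refine ⟨x '' W, image_mem_map hW, ?_⟩
    rintro _ ⟨c, hc, rfl⟩ _ ⟨d, hd, rfl⟩
    rcases le_total c d with hcd | hdc
    · exact hWx c hc d hd hcd
    · exact dist_comm (x c) (x d) ▸ hWx d hd c hc hdc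
  by_contra! hfar
  obtain ⟨c₁, ⟨hc₁V, hc₁⟩, d₁, ⟨hd₁V, -⟩, hcd₁, hfar₁⟩ := hfar _ (inter_mem hV hl)
  obtain ⟨c₂, ⟨hc₂V, -⟩, d₂, ⟨hd₂V, hd₂⟩, hcd₂, hfar₂⟩ := hfar _ (inter_mem hV hc₁)
  have hd₂c₁ : d₂ < c₁ := hd₂
  have hlong : ¬ dist (x c₂) (x d₂) ≤ ε / 3 := by linarith
  have hd₂c₁' := (hVx hc₂V hd₂V hc₁V hcd₂ hd₂c₁.le).resolve_left hlong
  have hd₂d₁' := (hVx hc₂V hd₂V hd₁V hcd₂ (hd₂c₁.le.trans hcd₁)).resolve_left hlong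
  linarith [dist_triangle_left (x c₁) (x d₁) (x d₂)]

end AdjacentIncrements

section DyadicChaining

variable {E : Type*} [PseudoMetricSpace E] {x : ℕ → ℕ → E} {b : ℕ → ℝ}

lemma exists_dist_le_of_dyadic_refinement (hx : ∀ n k, x (n + 1) (2 * k) = x n k)
    (hb : ∀ n k, dist (x (n + 1) (2 * k)) (x (n + 1) (2 * k + 1)) ≤ b n ∨
      dist (x (n + 1) (2 * k + 1)) (x (n + 1) (2 * k + 2)) ≤ b n) (n i : ℕ) :
    ∃ i', dist (x (n + 1) i) (x n i') ≤ b n ∧ i ≤ 2 * i' + 1 ∧ 2 * i' ≤ i + 1 := by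
  have hb_nonneg : 0 ≤ b n := (hb n 0).elim dist_nonneg.trans dist_nonneg.trans
  obtain ⟨c, rfl | rfl⟩ := Nat.even_or_odd' i
  · exact ⟨c, by rwa [hx, dist_self], by omega, by omega⟩
  · rcases hb n c with hleft | hright
    · exact ⟨c, by rwa [← hx n c, dist_comm], by omega, by omega⟩
    · exact ⟨c + 1, by rwa [← hx n (c + 1)], by omega, by omega⟩

lemma adjacentIncrementsLE_of_dyadic_refinement (hx : ∀ n k, x (n + 1) (2 * k) = x n k)
    (hb : ∀ n k, dist (x (n + 1) (2 * k)) (x (n + 1) (2 * k + 1)) ≤ b n ∨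
      dist (x (n + 1) (2 * k + 1)) (x (n + 1) (2 * k + 2)) ≤ b n) (a p : ℕ) :
    AdjacentIncrementsLE (x p) (2 * ∑ n ∈ Finset.range p, b n)
      (Icc (a * 2 ^ p) ((a + 1) * 2 ^ p)) := by
  have hb_nonneg (n : ℕ) : 0 ≤ b n := (hb n 0).elim dist_nonneg.trans dist_nonneg.trans
  induction p with
  | zero =>
    rintro i ⟨hi, -⟩ j - k ⟨-, hk⟩ hij hjk
    rcases (show i = j ∨ j = k by omega) with rfl | rfl <;> simp
  | succ p ih =>
    rintro i ⟨hi, -⟩ j - k ⟨-, hk⟩ hij hjk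
    have hsum_nonneg : 0 ≤ 2 * ∑ n ∈ Finset.range (p + 1), b n :=
      mul_nonneg zero_le_two (Finset.sum_nonneg fun n _ => hb_nonneg n)
    rcases hij.eq_or_lt with rfl | hij
    · exact Or.inl (by rwa [dist_self])
    rcases hjk.eq_or_lt with rfl | hjk
    · exact Or.inr (by rwa [dist_self])
    obtain ⟨i', hi', hii', hi'i⟩ := exists_dist_le_of_dyadic_refinement hx hb p i
    obtain ⟨j', hj', hjj', hj'j⟩ := exists_dist_le_of_dyadic_refinement hx hb p j
    obtain ⟨k', hk', hkk', hk'k⟩ := exists_dist_le_of_dyadic_refinement hx hb p k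
    rw [pow_succ, ← mul_assoc] at hi hk
    rw [Finset.sum_range_succ]
    refine (ih (r := i') ?_ (s := j') ?_ (t := k') ?_ (by omega) (by omega)).imp
      (fun h => ?_) (fun h => ?_)
    · constructor <;> omega
    · constructor <;> omega
    · constructor <;> omega
    · linarith [dist_triangle4_right (x (p + 1) i) (x (p + 1) j) (x p i') (x p j')]
    · linarith [dist_triangle4_right (x (p + 1) j) (x (p + 1) k) (x p j') (x p k')]

end DyadicChaining

section Dyadics

/-- The dyadic point `k / 2 ^ n` of the unit interval, with `k` clamped to `2 ^ n`. -/
def dyadicPoint (n k : ℕ) : unitInterval := projIcc (0 : ℝ) 1 zero_le_one (k / 2 ^ n)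

/-- The dyadic rationals of the unit interval. -/
def dyadics : Set unitInterval := {d | ∃ n k : ℕ, (d : ℝ) = k / 2 ^ n}

lemma dyadicPoint_mono (n : ℕ) : Monotone (dyadicPoint n) := fun _ _ h =>
  monotone_projIcc _ (by gcongr)

lemma dyadicPoint_succ_two_mul (n k : ℕ) : dyadicPoint (n + 1) (2 * k) = dyadicPoint n k := by
  unfold dyadicPoint
  congr 1
  push_cast
  rw [pow_succ]
  field_simp

lemma dyadicPoint_eq_one {n k : ℕ} (h : 2 ^ n ≤ k) : dyadicPoint n k = 1 :=
  projIcc_of_right_le _ ((one_le_div (by positivity)).2 (by exact_mod_cast h))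

lemma edist_dyadicPoint_succ_le (n k : ℕ) :
    edist (dyadicPoint n k) (dyadicPoint n (k + 1)) ≤ 2⁻¹ ^ n := by
  have h := LipschitzWith.projIcc (zero_le_one (α := ℝ)) (k / 2 ^ n) ((k + 1 : ℕ) / 2 ^ n)
  have hlength : dist ((k : ℝ) / 2 ^ n) ((k + 1 : ℕ) / 2 ^ n) = 2⁻¹ ^ n := by
    rw [Real.dist_eq, ← sub_div, Nat.cast_add_one, sub_add_cancel_left, abs_div, abs_neg, abs_one,
      abs_of_pos (by positivity), one_div, inv_pow]
  rwa [ENNReal.coe_one, one_mul, edist_dist ((k : ℝ) / 2 ^ n), hlength,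
    ENNReal.ofReal_pow (by positivity), ENNReal.ofReal_inv_of_pos two_pos,
    ENNReal.ofReal_ofNat] at h

lemma one_mem_dyadics : (1 : unitInterval) ∈ dyadics := ⟨0, 1, by simp⟩

lemma eventually_exists_dyadicPoint_eq {d : unitInterval} (hd : d ∈ dyadics) :
    ∀ᶠ n in atTop, ∃ k : ℕ, (d : ℝ) = k / 2 ^ n ∧ dyadicPoint n k = d := by
  obtain ⟨n, k, h⟩ := hd
  filter_upwards [eventually_ge_atTop n] with p hp
  obtain ⟨q, rfl⟩ := Nat.exists_eq_add_of_le hp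
  have hd : (d : ℝ) = (k * 2 ^ q : ℕ) / 2 ^ (n + q) := by
    rw [h, pow_add]; push_cast; field_simp
  exact ⟨k * 2 ^ q, hd, by rw [dyadicPoint, ← hd, projIcc_val]⟩

lemma dense_dyadics : Dense dyadics := by
  refine dense_of_exists_between fun a b hab => ?_
  obtain ⟨n, hn⟩ := exists_pow_lt_of_lt_one (sub_pos.2 (show (a : ℝ) < b from hab)) one_half_lt_one
  have hpow : (0 : ℝ) < 2 ^ n := by positivity
  set c : ℝ := (⌊(a : ℝ) * 2 ^ n⌋₊ + 1 : ℕ) / 2 ^ n with hc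
  have hac : a < c := by
    rw [lt_div_iff₀ hpow]; exact_mod_cast Nat.lt_floor_add_one _
  have hcb : c < b := by
    have hfloor : (⌊(a : ℝ) * 2 ^ n⌋₊ : ℝ) / 2 ^ n ≤ a :=
      (div_le_iff₀ hpow).2 (Nat.floor_le (mul_nonneg a.2.1 hpow.le))
    rw [one_div_pow] at hn
    rw [hc, Nat.cast_add_one, add_div]
    linarith
  exact ⟨⟨c, a.2.1.trans hac.le, hcb.le.trans b.2.2⟩, ⟨n, _, rfl⟩, hac, hcb⟩

lemma nhdsWithin_dyadics_inter_Ioi_neBot {t : unitInterval} (ht : t < 1) :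
    (𝓝[dyadics ∩ Ioi t] t).NeBot := by
  rw [← mem_closure_iff_nhdsWithin_neBot, inter_comm]
  have hsub : Ioi t ⊆ closure (Ioi t ∩ dyadics) :=
    dense_dyadics.open_subset_closure_inter isOpen_Ioi
  have ht_mem : t ∈ closure (Ioi t) := by
    rw [closure_Ioi' (a := t) ⟨1, ht⟩]; exact self_mem_Ici
  exact closure_minimal hsub isClosed_closure ht_mem

/-- The dyadic points lying in the `a`-th closed dyadic interval of generation `n`. -/
def dyadicCell (n a : ℕ) : Set unitInterval :=
  {d ∈ dyadics | (a : ℝ) / 2 ^ n ≤ d ∧ (d : ℝ) ≤ (a + 1) / 2 ^ n}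

lemma exists_dyadicCell_mem_nhdsGT (n : ℕ) (t : unitInterval) :
    ∃ a, dyadicCell n a ∈ 𝓝[dyadics ∩ Ioi t] t := by
  have hpow : (0 : ℝ) < 2 ^ n := by positivity
  refine ⟨⌊(t : ℝ) * 2 ^ n⌋₊, ?_⟩
  have hle : (⌊(t : ℝ) * 2 ^ n⌋₊ : ℝ) / 2 ^ n ≤ t := by
    rw [div_le_iff₀ hpow]; exact Nat.floor_le (mul_nonneg t.2.1 hpow.le)
  have hlt : (t : ℝ) < (⌊(t : ℝ) * 2 ^ n⌋₊ + 1) / 2 ^ n := by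
    rw [lt_div_iff₀ hpow]; exact Nat.lt_floor_add_one _
  filter_upwards [self_mem_nhdsWithin, mem_nhdsWithin_of_mem_nhds
    (continuous_subtype_val.continuousAt.eventually_lt_const hlt)] with d hd hdlt
  exact ⟨hd.1, hle.trans (show (t : ℝ) < d from hd.2).le, hdlt.le⟩

lemma exists_dyadicCell_mem_nhdsLT (n : ℕ) (t : unitInterval) :
    ∃ a, dyadicCell n a ∈ 𝓝[dyadics ∩ Iio t] t := by
  rcases eq_or_lt_of_le t.2.1 with ht | ht
  · refine ⟨0, mem_of_superset self_mem_nhdsWithin fun d hd => ?_⟩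
    exact absurd (show (d : ℝ) < t from hd.2) (ht ▸ d.2.1.not_gt)
  have hpow : (0 : ℝ) < 2 ^ n := by positivity
  obtain ⟨a, ha⟩ : ∃ a, ⌈(t : ℝ) * 2 ^ n⌉₊ = a + 1 :=
    Nat.exists_eq_add_one_of_ne_zero (Nat.ceil_pos.2 (by positivity)).ne'
  have hlt : (a : ℝ) / 2 ^ n < t := by
    rw [div_lt_iff₀ hpow]; exact Nat.lt_ceil.1 (by omega)
  have hle : (t : ℝ) ≤ (a + 1) / 2 ^ n := by
    rw [le_div_iff₀ hpow]; exact_mod_cast ha ▸ Nat.le_ceil ((t : ℝ) * 2 ^ n)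
  refine ⟨a, ?_⟩
  filter_upwards [self_mem_nhdsWithin, mem_nhdsWithin_of_mem_nhds
    (continuous_subtype_val.continuousAt.eventually_const_lt hlt)] with d hd hltd
  exact ⟨hd.1, hltd.le, (show (d : ℝ) < t from hd.2).le.trans hle⟩

variable {E : Type*} [PseudoMetricSpace E] {x : unitInterval → E} {b : ℕ → ℝ}

/-- Of the increments of `x` over the two halves of a dyadic interval of generation `n`, one always
has length at most `η`. -/
def DyadicIncrementsLE (x : unitInterval → E) (n : ℕ) (η : ℝ) : Prop :=
  ∀ k, dist (x (dyadicPoint (n + 1) (2 * k))) (x (dyadicPoint (n + 1) (2 * k + 1))) ≤ η ∨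
    dist (x (dyadicPoint (n + 1) (2 * k + 1))) (x (dyadicPoint (n + 1) (2 * k + 2))) ≤ η

lemma adjacentIncrementsLE_dyadicCell {n : ℕ} (hb : Summable fun p => b (n + p))
    (h : ∀ p, DyadicIncrementsLE x (n + p) (b (n + p))) (a : ℕ) :
    AdjacentIncrementsLE x (2 * ∑' p, b (n + p)) (dyadicCell n a) := by
  rintro r ⟨hr, har, -⟩ s ⟨hs, -, -⟩ t ⟨ht, -, hta⟩ hrs hst
  have hshift := tendsto_add_atTop_nat n
  simp_rw [add_comm _ n] at hshift
  obtain ⟨p, ⟨i, hi, hir⟩, ⟨j, hj, hjs⟩, k, hk, hkt⟩ :=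
    ((hshift.eventually (eventually_exists_dyadicPoint_eq hr)).and
      ((hshift.eventually (eventually_exists_dyadicPoint_eq hs)).and
        (hshift.eventually (eventually_exists_dyadicPoint_eq ht)))).exists
  have hb_nonneg (q : ℕ) : 0 ≤ b (n + q) := (h q 0).elim dist_nonneg.trans dist_nonneg.trans
  have hsum : 2 * ∑ q ∈ Finset.range p, b (n + q) ≤ 2 * ∑' q, b (n + q) := by
    gcongr
    exact hb.sum_le_tsum _ fun q _ => hb_nonneg q
  have hpow (m : ℕ) : (0 : ℝ) < 2 ^ m := by positivity
  have hij : i ≤ j := by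
    have : (r : ℝ) ≤ s := hrs
    rw [hi, hj, div_le_div_iff_of_pos_right (hpow _)] at this
    exact_mod_cast this
  have hjk : j ≤ k := by
    have : (s : ℝ) ≤ t := hst
    rw [hj, hk, div_le_div_iff_of_pos_right (hpow _)] at this
    exact_mod_cast this
  have hai : a * 2 ^ p ≤ i := by
    rw [hi, pow_add, ← div_div, div_right_comm, div_le_div_iff_of_pos_right (hpow n),
      le_div_iff₀ (hpow p)] at har
    exact_mod_cast har
  have hka : k ≤ (a + 1) * 2 ^ p := by
    rw [hk, pow_add, ← div_div, div_right_comm, div_le_div_iff_of_pos_right (hpow n),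
      div_le_iff₀ (hpow p)] at hta
    exact_mod_cast hta
  have key := adjacentIncrementsLE_of_dyadic_refinement (x := fun p k => x (dyadicPoint (n + p) k))
    (fun p k => congrArg x (dyadicPoint_succ_two_mul (n + p) k)) h a p
    ⟨hai, hij.trans (hjk.trans hka)⟩ ⟨hai.trans hij, hjk.trans hka⟩
    ⟨hai.trans (hij.trans hjk), hka⟩ hij hjk
  simp only [hir, hjs, hkt] at key
  exact key.imp hsum.trans' hsum.trans'

end Dyadics

section CadlagExtension

lemma tendsto_nhdsWithin_of_mapClusterPt {T E : Type*} [TopologicalSpace T] [TopologicalSpace E]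
    [RegularSpace E] {D I : Set T} {x y : T → E} (hI : IsOpen I)
    (hy : ∀ u, MapClusterPt (y u) (𝓝[D] u) x) {t : T} {l : E}
    (hx : Tendsto x (𝓝[D ∩ I] t) (𝓝 l)) : Tendsto y (𝓝[I] t) (𝓝 l) := by
  refine (closed_nhds_basis l).tendsto_right_iff.2 fun C ⟨hCl, hC⟩ => ?_
  have hxC := eventually_nhdsWithin_iff.1 (hx hCl)
  filter_upwards [self_mem_nhdsWithin,
    mem_nhdsWithin_of_mem_nhds (eventually_eventually_nhds.2 hxC)] with u huI hu
  refine hC.mem_of_mapClusterPt (hy u) (eventually_nhdsWithin_iff.2 ?_)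
  filter_upwards [hu, hI.mem_nhds huI] with d hd hdI hdD using hd ⟨hdD, hdI⟩

variable {E : Type*} [PseudoMetricSpace E] {x : unitInterval → E}

lemma Cadlag.comp_orderIso {F : Type*} [TopologicalSpace F] {y : unitInterval → F}
    (hy : Cadlag y) (ψ : unitInterval ≃o unitInterval) : Cadlag (y ∘ ψ) := by
  have hψ {I J : Set unitInterval} {t : unitInterval} (h : MapsTo ψ I J) :
      Tendsto ψ (𝓝[I] t) (𝓝[J] (ψ t)) :=
    ψ.continuous.continuousWithinAt.tendsto_nhdsWithin h
  refine ⟨fun t => (hy.1 (ψ t)).comp (hψ fun _ hu => ψ.strictMono hu), fun t => ?_⟩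
  obtain ⟨l, hl⟩ := hy.2 (ψ t)
  exact ⟨l, hl.comp (hψ fun _ hu => ψ.strictMono hu)⟩

lemma cadlag_const {F : Type*} [TopologicalSpace F] (c : F) : Cadlag fun _ => c :=
  ⟨fun _ => tendsto_const_nhds, fun _ => ⟨c, tendsto_const_nhds⟩⟩

lemma exists_tendsto_nhdsWithin_dyadics_inter_Ioi [CompleteSpace E] [Nonempty E]
    (hx : ∀ η > 0, ∃ n, ∀ a, AdjacentIncrementsLE x η (dyadicCell n a)) (t : unitInterval) :
    ∃ l, Tendsto x (𝓝[dyadics ∩ Ioi t] t) (𝓝 l) := by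
  rcases eq_or_neBot (𝓝[dyadics ∩ Ioi t] t) with hbot | hne
  · exact ⟨Classical.arbitrary E, by rw [hbot]; exact tendsto_bot⟩
  refine cauchy_map_iff_exists_tendsto.1 (cauchy_map_of_adjacentIncrementsLE (fun η hη => ?_) ?_)
  · obtain ⟨n, hn⟩ := hx η hη
    obtain ⟨a, ha⟩ := exists_dyadicCell_mem_nhdsGT n t
    exact ⟨_, ha, hn a⟩
  · filter_upwards [self_mem_nhdsWithin] with c hc
    exact mem_nhdsWithin_of_mem_nhds (Iio_mem_nhds hc.2)

lemma exists_tendsto_nhdsWithin_dyadics_inter_Iio [CompleteSpace E] [Nonempty E]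
    (hx : ∀ η > 0, ∃ n, ∀ a, AdjacentIncrementsLE x η (dyadicCell n a)) (t : unitInterval) :
    ∃ l, Tendsto x (𝓝[dyadics ∩ Iio t] t) (𝓝 l) := by
  rcases eq_or_neBot (𝓝[dyadics ∩ Iio t] t) with hbot | hne
  · exact ⟨Classical.arbitrary E, by rw [hbot]; exact tendsto_bot⟩
  have hne' : (map OrderDual.toDual (𝓝[dyadics ∩ Iio t] t)).NeBot := inferInstance
  have hcauchy := cauchy_map_of_adjacentIncrementsLE (x := x ∘ OrderDual.ofDual)
    (l := map OrderDual.toDual (𝓝[dyadics ∩ Iio t] t)) (fun η hη => ?_) ?_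
  · exact cauchy_map_iff_exists_tendsto.1 hcauchy
  · obtain ⟨n, hn⟩ := hx η hη
    obtain ⟨a, ha⟩ := exists_dyadicCell_mem_nhdsLT n t
    exact ⟨_, ha, (hn a).comp_ofDual⟩
  · rw [eventually_map]
    filter_upwards [self_mem_nhdsWithin] with c hc
    have hIoi : Ioi c ∈ 𝓝[dyadics ∩ Iio t] t := mem_nhdsWithin_of_mem_nhds (Ioi_mem_nhds hc.2)
    exact hIoi

lemma exists_cadlag_extension_of_adjacentIncrementsLE [CompleteSpace E]
    (hx : ∀ η > 0, ∃ n, ∀ a, AdjacentIncrementsLE x η (dyadicCell n a)) :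
    ∃ y : unitInterval → E, Cadlag y ∧ y 1 = x 1 ∧
      ∀ t < 1, Tendsto x (𝓝[dyadics ∩ Ioi t] t) (𝓝 (y t)) := by
  have : Nonempty E := ⟨x 1⟩
  choose R hR using exists_tendsto_nhdsWithin_dyadics_inter_Ioi hx
  choose L hL using exists_tendsto_nhdsWithin_dyadics_inter_Iio hx
  have hy_of_lt {t : unitInterval} (ht : t < 1) : Function.update R 1 (x 1) t = R t :=
    Function.update_of_ne ht.ne _ _
  have hy (t : unitInterval) : MapClusterPt (Function.update R 1 (x 1) t) (𝓝[dyadics] t) x := by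
    rcases eq_or_lt_of_le (show t ≤ 1 from t.2.2) with rfl | ht
    · rw [Function.update_self, mapClusterPt_iff_frequently]
      intro s hs hnot
      exact hnot.self_of_nhdsWithin one_mem_dyadics (mem_of_mem_nhds hs)
    · rw [hy_of_lt ht]
      have := nhdsWithin_dyadics_inter_Ioi_neBot ht
      exact (hR t).mapClusterPt.mono (nhdsWithin_mono _ inter_subset_left)
  refine ⟨Function.update R 1 (x 1), ⟨fun t => ?_, fun t => ⟨L t, ?_⟩⟩, Function.update_self _ _ _,
    fun t ht => (hy_of_lt ht).symm ▸ hR t⟩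
  · rcases eq_or_lt_of_le (show t ≤ 1 from t.2.2) with rfl | ht
    · rw [show Ioi (1 : unitInterval) = ∅ from isMax_iff_eq_top.2 rfl |>.Ioi_eq, nhdsWithin_empty]
      exact tendsto_bot
    · exact tendsto_nhdsWithin_of_mapClusterPt isOpen_Ioi hy ((hy_of_lt ht).symm ▸ hR t)
  · exact tendsto_nhdsWithin_of_mapClusterPt isOpen_Iio hy (hL t)

theorem exists_cadlag_extension_of_summable [CompleteSpace E] {b : ℕ → ℝ} (hb : Summable b)
    (h : ∀ᶠ n in atTop, DyadicIncrementsLE x n (b n)) :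
    ∃ y : unitInterval → E, Cadlag y ∧ y 1 = x 1 ∧
      ∀ t < 1, Tendsto x (𝓝[dyadics ∩ Ioi t] t) (𝓝 (y t)) := by
  refine exists_cadlag_extension_of_adjacentIncrementsLE fun η hη => ?_
  have htail := tendsto_sum_nat_add b
  simp_rw [add_comm _ (_ : ℕ)] at htail
  obtain ⟨n, htail_n, hn⟩ := ((htail.eventually (gt_mem_nhds (half_pos hη))).and
    (eventually_forall_ge_atTop.2 h)).exists
  have hb_n : Summable fun p => b (n + p) := by
    simpa only [add_comm] using (summable_nat_add_iff n).2 hb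
  refine ⟨n, fun a r hr s hs t ht hrs hst => ?_⟩
  have hη' : 2 * ∑' p, b (n + p) ≤ η := by linarith
  exact (adjacentIncrementsLE_dyadicCell hb_n (fun p => hn (n + p) (n.le_add_right p)) a
    hr hs ht hrs hst).imp hη'.trans' hη'.trans'

end CadlagExtension

section IndependentSamples

variable {ι E : Type*} [Fintype ι] [MeasurableSpace E] {ν Λ : Measure E}

lemma card_mul_measure_le (hν : (Fintype.card ι : ℝ≥0∞) • ν ≤ Λ) (A : Set E) :
    Fintype.card ι * ν A ≤ Λ A := by
  simpa only [Measure.smul_apply, smul_eq_mul] using hν A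

lemma integral_eq_zero_of_odd {σ : E ≃ᵐ E} (hσ : MeasurePreserving σ ν ν) {u : E → ℝ}
    (hu : ∀ e, u (σ e) = -u e) : ∫ e, u e ∂ν = 0 := by
  have h : ∫ e, u (σ e) ∂ν = ∫ e, u e ∂ν := hσ.integral_comp' u
  simp only [hu, integral_neg] at h
  linarith

lemma measure_one_lt_abs_le_lintegral {u : E → ℝ} (hu : Measurable u) {p : ℝ} (hp : 0 ≤ p) :
    Λ {e | 1 < |u e|} ≤ ∫⁻ e, ‖u e‖ₑ ^ p ∂Λ := by
  refine (measure_mono fun e he => ?_).trans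
    (meas_ge_le_lintegral_div (ε := 1) (by fun_prop) one_ne_zero ENNReal.one_ne_top) |>.trans_eq
      (div_one _)
  have he1 : 1 ≤ ‖u e‖ₑ := by
    rw [Real.enorm_eq_ofReal_abs]
    exact ENNReal.one_le_ofReal.2 (le_of_lt he)
  exact (ENNReal.one_rpow p).symm.trans_le (ENNReal.rpow_le_rpow he1 hp)

variable [IsProbabilityMeasure ν]

lemma measure_pi_preimage_eval (i : ι) {A : Set E} (hA : MeasurableSet A) :
    Measure.pi (fun _ : ι => ν) (Function.eval i ⁻¹' A) = ν A :=
  (measurePreserving_eval (fun _ : ι => ν) i).measure_preimage hA.nullMeasurableSet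

lemma measure_pi_exists_mem_le (hν : (Fintype.card ι : ℝ≥0∞) • ν ≤ Λ) {A : Set E}
    (hA : MeasurableSet A) : Measure.pi (fun _ : ι => ν) {e | ∃ i, e i ∈ A} ≤ Λ A := by
  calc Measure.pi (fun _ : ι => ν) {e | ∃ i, e i ∈ A}
      ≤ ∑ i : ι, Measure.pi (fun _ : ι => ν) (Function.eval i ⁻¹' A) := by
        refine (measure_mono fun e he => ?_).trans (measure_iUnion_fintype_le _ _)
        simpa only [mem_iUnion, mem_preimage, Function.eval, mem_ofPred_eq] using he
    _ = Fintype.card ι * ν A := by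
        simp only [measure_pi_preimage_eval _ hA, Finset.sum_const, Finset.card_univ,
          nsmul_eq_mul]
    _ ≤ Λ A := card_mul_measure_le hν A

lemma measure_pi_exists_ne_mem_le (hν : (Fintype.card ι : ℝ≥0∞) • ν ≤ Λ) {A B : Set E}
    (hA : MeasurableSet A) (hB : MeasurableSet B) :
    Measure.pi (fun _ : ι => ν) {e | ∃ i j, i ≠ j ∧ e i ∈ A ∧ e j ∈ B} ≤ Λ A * Λ B := by
  have hpair (i j : ι) :
      Measure.pi (fun _ : ι => ν) {e | i ≠ j ∧ e i ∈ A ∧ e j ∈ B} ≤ ν A * ν B := by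
    by_cases hij : i = j
    · simp only [hij, ne_eq, not_true_eq_false, false_and, ofPred_false, measure_empty, zero_le]
    have hindep : iIndepFun (fun (i : ι) (e : ι → E) => e i) (Measure.pi fun _ : ι => ν) :=
      iIndepFun_pi (X := fun _ x => x) fun _ => aemeasurable_id
    rw [← measure_pi_preimage_eval i hA, ← measure_pi_preimage_eval j hB]
    refine le_of_le_of_eq (measure_mono fun e he => ?_)
      ((hindep.indepFun hij).measure_inter_preimage_eq_mul A B hA hB)
    exact he.2
  calc Measure.pi (fun _ : ι => ν) {e | ∃ i j, i ≠ j ∧ e i ∈ A ∧ e j ∈ B}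
      ≤ Measure.pi (fun _ : ι => ν) (⋃ i, ⋃ j, {e | i ≠ j ∧ e i ∈ A ∧ e j ∈ B}) :=
        measure_mono fun e he => by simpa only [mem_iUnion, mem_ofPred_eq] using he
    _ ≤ ∑ _i : ι, ∑ _j : ι, ν A * ν B :=
        (measure_iUnion_fintype_le _ _).trans <| Finset.sum_le_sum fun i _ =>
          (measure_iUnion_fintype_le _ _).trans <| Finset.sum_le_sum fun j _ => hpair i j
    _ = (Fintype.card ι * ν A) * (Fintype.card ι * ν B) := by
        simp only [Finset.sum_const, Finset.card_univ, nsmul_eq_mul]; ring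
    _ ≤ Λ A * Λ B := by gcongr <;> exact card_mul_measure_le hν _

lemma exp_le_one_add_add_sq_mul_exp_abs (y : ℝ) :
    Real.exp y ≤ 1 + y + y ^ 2 * Real.exp |y| := by
  have h := Complex.norm_exp_sub_sum_le_norm_mul_exp (y : ℂ) 2
  have hcast : Complex.exp y - ∑ m ∈ Finset.range 2, (y : ℂ) ^ m / m.factorial
      = (Real.exp y - (1 + y) : ℝ) := by
    simp [Finset.sum_range_succ]
  rw [hcast, Complex.norm_real, Complex.norm_real, Real.norm_eq_abs, Real.norm_eq_abs,
    sq_abs] at h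
  linarith [le_abs_self (Real.exp y - (1 + y))]

lemma mgf_le_exp_of_abs_le_one {w : E → ℝ} (hw : Measurable w) (hw1 : ∀ e, |w e| ≤ 1)
    (hw0 : ∫ e, w e ∂ν = 0) {s : ℝ} (hs : 0 ≤ s) :
    mgf w ν s ≤ Real.exp (s ^ 2 * Real.exp s * ∫ e, w e ^ 2 ∂ν) := by
  have hsw (e : E) : |s * w e| ≤ s := by
    rw [abs_mul, abs_of_nonneg hs]; exact mul_le_of_le_one_right hs (hw1 e)
  have hw_int : Integrable w ν := .of_bound hw.aestronglyMeasurable 1 (ae_of_all _ hw1)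
  have hw2_int : Integrable (fun e => w e ^ 2) ν :=
    .of_bound (hw.pow_const 2).aestronglyMeasurable 1 (ae_of_all _ fun e => by
      rw [Real.norm_eq_abs, abs_pow]; exact pow_le_one₀ (abs_nonneg _) (hw1 e))
  have hlin_int : Integrable (fun e => 1 + s * w e) ν :=
    (integrable_const 1).add (hw_int.const_mul s)
  have hexp_int : Integrable (fun e => Real.exp (s * w e)) ν :=
    .of_bound (by fun_prop) (Real.exp s) (ae_of_all _ fun e => by
      rw [Real.norm_eq_abs, Real.abs_exp]
      exact Real.exp_le_exp.2 ((le_abs_self _).trans (hsw e)))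
  calc mgf w ν s
      ≤ ∫ e, (1 + s * w e + s ^ 2 * Real.exp s * w e ^ 2) ∂ν := by
        refine integral_mono hexp_int (hlin_int.add (hw2_int.const_mul _)) fun e => ?_
        refine (exp_le_one_add_add_sq_mul_exp_abs (s * w e)).trans ?_
        have : (s * w e) ^ 2 * Real.exp |s * w e| ≤ (s * w e) ^ 2 * Real.exp s := by
          gcongr; exact hsw e
        linarith
    _ = s ^ 2 * Real.exp s * ∫ e, w e ^ 2 ∂ν + 1 := by
        rw [integral_add hlin_int (hw2_int.const_mul _),
          integral_add (integrable_const 1) (hw_int.const_mul s), integral_const_mul,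
          integral_const_mul, hw0, integral_const, probReal_univ, smul_eq_mul]
        ring
    _ ≤ Real.exp (s ^ 2 * Real.exp s * ∫ e, w e ^ 2 ∂ν) := Real.add_one_le_exp _

lemma mgf_sum_pi (w : E → ℝ) (s : ℝ) :
    mgf (fun e : ι → E => ∑ i, w (e i)) (Measure.pi fun _ : ι => ν) s
      = mgf w ν s ^ Fintype.card ι := by
  simp only [mgf, Finset.mul_sum, Real.exp_sum]
  exact integral_fintype_prod_eq_pow (ι := ι) fun e => Real.exp (s * w e)

lemma measureReal_pi_le_sum_le {w : E → ℝ} (hw : Measurable w) (hw1 : ∀ e, |w e| ≤ 1)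
    (hw0 : ∫ e, w e ∂ν = 0) {r : ℝ} (hr0 : 0 < r) (hr1 : r ≤ 1)
    (hr : Fintype.card ι * ∫ e, w e ^ 2 ∂ν ≤ r) (L : ℝ) :
    (Measure.pi fun _ : ι => ν).real {e | 2 * L ≤ ∑ i, w (e i)} ≤ Real.exp 2 * r ^ L := by
  -- the optimal exponent in the Chernoff bound, up to a constant
  set s : ℝ := -Real.log r / 2 with hs_def
  have hs : 0 ≤ s := by linarith [Real.log_nonpos hr0.le hr1]
  have hexp_int : Integrable (fun e : ι → E => Real.exp (s * ∑ i, w (e i)))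
      (Measure.pi fun _ : ι => ν) := by
    simp only [Finset.mul_sum, Real.exp_sum]
    refine .fintype_prod (f := fun _ e => Real.exp (s * w e)) fun _ =>
      .of_bound (by fun_prop) (Real.exp s) (ae_of_all _ fun e => ?_)
    rw [Real.norm_eq_abs, Real.abs_exp, Real.exp_le_exp]
    exact mul_le_of_le_one_right hs ((le_abs_self _).trans (hw1 e))
  have hr_exp : r = Real.exp (-s) * Real.exp (-s) := by
    rw [← Real.exp_add, hs_def, show -(-Real.log r / 2) + -(-Real.log r / 2) = Real.log r by ring,
      Real.exp_log hr0]
  have hexponent : Fintype.card ι * (s ^ 2 * Real.exp s * ∫ e, w e ^ 2 ∂ν) ≤ 2 := by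
    calc Fintype.card ι * (s ^ 2 * Real.exp s * ∫ e, w e ^ 2 ∂ν)
        = s ^ 2 * Real.exp s * (Fintype.card ι * ∫ e, w e ^ 2 ∂ν) := by ring
      _ ≤ s ^ 2 * Real.exp s * r := by gcongr
      _ = s ^ 2 * Real.exp (-s) := by
          rw [hr_exp, Real.exp_neg]; field_simp
      _ ≤ 2 := by
          rw [Real.exp_neg, ← div_eq_mul_inv, div_le_iff₀ (Real.exp_pos s)]
          linarith [Real.quadratic_le_exp_of_nonneg hs]
  calc (Measure.pi fun _ : ι => ν).real {e | 2 * L ≤ ∑ i, w (e i)}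
      ≤ Real.exp (-s * (2 * L)) * mgf w ν s ^ Fintype.card ι := by
        rw [← mgf_sum_pi]; exact measure_ge_le_exp_mul_mgf _ hs hexp_int
    _ ≤ r ^ L * Real.exp (s ^ 2 * Real.exp s * ∫ e, w e ^ 2 ∂ν) ^ Fintype.card ι := by
        rw [Real.rpow_def_of_pos hr0, hs_def, show -(-Real.log r / 2) * (2 * L)
          = Real.log r * L by ring, ← hs_def]
        gcongr
        · exact mgf_nonneg
        · exact mgf_le_exp_of_abs_le_one hw hw1 hw0 hs
    _ ≤ Real.exp 2 * r ^ L := by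
        rw [← Real.exp_nat_mul, mul_comm]
        gcongr

lemma measure_pi_lt_abs_sum_le_of_lt (hν : (Fintype.card ι : ℝ≥0∞) • ν ≤ Λ) {w : E → ℝ}
    (hw : Measurable w) (hw1 : ∀ e, |w e| ≤ 1) (hw0 : ∫ e, w e ∂ν = 0) {L : ℝ} (hL : 0 < L)
    {r : ℝ≥0∞} (hr : ∫⁻ e, ‖w e‖ₑ ^ (2 : ℝ) ∂Λ < r) (hr1 : r ≤ 1) :
    Measure.pi (fun _ : ι => ν) {e | 2 * L < |∑ i, w (e i)|}
      ≤ 2 * ENNReal.ofReal (Real.exp 2) * r ^ L := by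
  have hr_top : r ≠ ⊤ := (hr1.trans_lt ENNReal.one_lt_top).ne
  have hr0 : 0 < r.toReal := ENNReal.toReal_pos (hr.trans_le' zero_le).ne' hr_top
  have hr1' : r.toReal ≤ 1 := ENNReal.toReal_mono ENNReal.one_ne_top hr1
  have hmom : Fintype.card ι * ∫ e, w e ^ 2 ∂ν ≤ r.toReal := by
    have hle : Fintype.card ι * ∫⁻ e, ‖w e‖ₑ ^ (2 : ℝ) ∂ν ≤ r := by
      rw [← smul_eq_mul, ← lintegral_smul_measure]
      exact (lintegral_mono' hν le_rfl).trans hr.le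
    rw [integral_eq_lintegral_of_nonneg_ae (ae_of_all _ fun _ => sq_nonneg _)
      (hw.pow_const 2).aestronglyMeasurable, ← ENNReal.toReal_natCast, ← ENNReal.toReal_mul]
    refine ENNReal.toReal_mono hr_top (le_of_eq_of_le ?_ hle)
    simp only [← Real.enorm_of_nonneg (sq_nonneg _), enorm_pow, ENNReal.rpow_two]
  have hupper := measureReal_pi_le_sum_le hw hw1 hw0 hr0 hr1' hmom L
  have hlower := measureReal_pi_le_sum_le (w := fun e => -w e) hw.neg
    (fun e => (abs_neg _).trans_le (hw1 e)) (by rw [integral_neg, hw0, neg_zero]) hr0 hr1'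
    (by simpa only [neg_sq] using hmom) L
  have hreal : Real.exp 2 * r.toReal ^ L = (ENNReal.ofReal (Real.exp 2) * r ^ L).toReal := by
    rw [ENNReal.toReal_mul, ENNReal.toReal_ofReal (Real.exp_pos 2).le, ← ENNReal.toReal_rpow]
  have htop : ENNReal.ofReal (Real.exp 2) * r ^ L ≠ ⊤ :=
    ENNReal.mul_ne_top ENNReal.ofReal_ne_top (ENNReal.rpow_ne_top_of_nonneg hL.le hr_top)
  rw [hreal, measureReal_def, ENNReal.toReal_le_toReal (measure_ne_top _ _) htop]
    at hupper hlower
  rw [mul_assoc, two_mul (_ * _ ^ _)]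
  refine (measure_mono fun e he => ?_).trans
    ((measure_union_le _ _).trans (add_le_add hupper hlower))
  rcases lt_abs.1 (show 2 * L < |∑ i, w (e i)| from he) with h | h
  · exact Or.inl h.le
  · exact Or.inr (by simpa only [mem_ofPred_eq, Finset.sum_neg_distrib] using h.le)

lemma measure_pi_lt_abs_sum_le (hν : (Fintype.card ι : ℝ≥0∞) • ν ≤ Λ) {w : E → ℝ}
    (hw : Measurable w) (hw1 : ∀ e, |w e| ≤ 1) (hw0 : ∫ e, w e ∂ν = 0) {L : ℝ} (hL : 0 < L) :
    Measure.pi (fun _ : ι => ν) {e | 2 * L < |∑ i, w (e i)|}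
      ≤ 2 * ENNReal.ofReal (Real.exp 2) * (∫⁻ e, ‖w e‖ₑ ^ (2 : ℝ) ∂Λ) ^ L := by
  set ρ := ∫⁻ e, ‖w e‖ₑ ^ (2 : ℝ) ∂Λ
  rcases le_or_gt 1 ρ with hρ1 | hρ1
  · calc Measure.pi (fun _ : ι => ν) {e | 2 * L < |∑ i, w (e i)|} ≤ 1 * 1 * 1 := by
          simpa only [mul_one] using prob_le_one
      _ ≤ 2 * ENNReal.ofReal (Real.exp 2) * ρ ^ L := by
          gcongr
          · exact one_le_two
          · exact ENNReal.one_le_ofReal.2 (Real.one_le_exp zero_le_two)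
          · exact ENNReal.one_le_rpow hρ1 hL
  have hlim : Tendsto (fun r : ℝ≥0∞ => 2 * ENNReal.ofReal (Real.exp 2) * r ^ L) (𝓝[>] ρ)
      (𝓝 (2 * ENNReal.ofReal (Real.exp 2) * ρ ^ L)) :=
    (ENNReal.Tendsto.const_mul (ENNReal.continuous_rpow_const.tendsto ρ)
      (Or.inr (by finiteness))).mono_left nhdsWithin_le_nhds
  have : (𝓝[>] ρ).NeBot := nhdsGT_neBot_of_exists_gt ⟨1, hρ1⟩
  refine ge_of_tendsto hlim ?_
  filter_upwards [Ioc_mem_nhdsGT hρ1] with r hr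
  exact measure_pi_lt_abs_sum_le_of_lt hν hw hw1 hw0 hL hr.1 hr.2

lemma measure_pi_lt_abs_sum_truncated_le (hν : (Fintype.card ι : ℝ≥0∞) • ν ≤ Λ)
    {σ : E ≃ᵐ E} (hσ : MeasurePreserving σ ν ν) {u : E → ℝ} (hu : Measurable u)
    (hu_odd : ∀ e, u (σ e) = -u e) {q : ℝ} (hq2 : q ≤ 2) {L : ℝ} (hL : 0 < L) :
    Measure.pi (fun _ : ι => ν) {e | 2 * L < |∑ i, {e | |u e| ≤ 1}.indicator u (e i)|}
      ≤ 2 * ENNReal.ofReal (Real.exp 2) * (∫⁻ e, ‖u e‖ₑ ^ q ∂Λ) ^ L := by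
  have htrunc_le (e : E) : |{e | |u e| ≤ 1}.indicator u e| ≤ 1 := by
    by_cases h : |u e| ≤ 1 <;> simp [h]
  have htrunc_odd (e : E) :
      {e | |u e| ≤ 1}.indicator u (σ e) = -{e | |u e| ≤ 1}.indicator u e := by
    by_cases h : |u e| ≤ 1 <;> simp [h, hu_odd]
  refine (measure_pi_lt_abs_sum_le hν (hu.indicator (measurableSet_le hu.abs measurable_const))
    htrunc_le (integral_eq_zero_of_odd hσ htrunc_odd) hL).trans ?_
  gcongr with e
  by_cases h : |u e| ≤ 1
  · rw [indicator_of_mem (show e ∈ {e | |u e| ≤ 1} from h)]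
    refine ENNReal.rpow_le_rpow_of_exponent_ge ?_ hq2
    rw [Real.enorm_eq_ofReal_abs]
    exact ENNReal.ofReal_le_one.2 h
  · rw [indicator_of_notMem (show e ∉ {e | |u e| ≤ 1} from h), enorm_zero,
      ENNReal.zero_rpow_of_pos two_pos]
    exact zero_le

-- Two large sums require a large term in both: two different terms, one common term, or else the
-- truncated part of one of the two sums is large, which the Chernoff bound makes unlikely.
lemma measure_pi_lt_abs_sum_and_lt_abs_sum_le (hν : (Fintype.card ι : ℝ≥0∞) • ν ≤ Λ)
    {σ : E ≃ᵐ E} (hσ : MeasurePreserving σ ν ν) {u v : E → ℝ} (hu : Measurable u)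
    (hv : Measurable v) (hu_odd : ∀ e, u (σ e) = -u e) (hv_odd : ∀ e, v (σ e) = -v e)
    {p₁ p₂ q L : ℝ} (hp₁ : 0 ≤ p₁) (hp₂ : 0 ≤ p₂) (hq2 : q ≤ 2) (hL : 0 < L) :
    Measure.pi (fun _ : ι => ν) {e | 2 * L < |∑ i, u (e i)| ∧ 2 * L < |∑ i, v (e i)|}
      ≤ (∫⁻ e, ‖u e‖ₑ ^ p₁ ∂Λ) * (∫⁻ e, ‖v e‖ₑ ^ p₁ ∂Λ) + ∫⁻ e, ‖u e * v e‖ₑ ^ p₂ ∂Λ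
        + 2 * ENNReal.ofReal (Real.exp 2)
          * ((∫⁻ e, ‖u e‖ₑ ^ q ∂Λ) ^ L + (∫⁻ e, ‖v e‖ₑ ^ q ∂Λ) ^ L) := by
  have hU : MeasurableSet {e | 1 < |u e|} := measurableSet_lt measurable_const hu.abs
  have hV : MeasurableSet {e | 1 < |v e|} := measurableSet_lt measurable_const hv.abs
  have hdistinct := (measure_pi_exists_ne_mem_le hν hU hV).trans <|
    mul_le_mul' (measure_one_lt_abs_le_lintegral hu hp₁) (measure_one_lt_abs_le_lintegral hv hp₁)
  have hcommon := (measure_pi_exists_mem_le hν (hU.inter hV)).trans <|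
    (measure_mono fun e he => show 1 < |u e * v e| from
      abs_mul (u e) (v e) ▸ one_lt_mul_of_lt_of_le he.1 he.2.le).trans
    (measure_one_lt_abs_le_lintegral (hu.mul hv) hp₂)
  have hsmall_u := measure_pi_lt_abs_sum_truncated_le hν hσ hu hu_odd hq2 hL
  have hsmall_v := measure_pi_lt_abs_sum_truncated_le hν hσ hv hv_odd hq2 hL
  rw [mul_add]
  refine (measure_mono ?_).trans <|
    (measure_union_le _ _).trans <| add_le_add
      ((measure_union_le _ _).trans (add_le_add hdistinct hcommon))
      ((measure_union_le _ _).trans (add_le_add hsmall_u hsmall_v))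
  have htrunc {w : E → ℝ} {e : ι → E} (h : ¬∃ i, 1 < |w (e i)|) :
      ∑ i, {e | |w e| ≤ 1}.indicator w (e i) = ∑ i, w (e i) :=
    Finset.sum_congr rfl fun i _ =>
      indicator_of_mem (show e i ∈ {e | |w e| ≤ 1} from not_lt.1 fun hi => h ⟨i, hi⟩) _
  rintro e ⟨hu_large, hv_large⟩
  by_cases hi : ∃ i, 1 < |u (e i)|
  · by_cases hj : ∃ j, 1 < |v (e j)|
    · obtain ⟨⟨i, hi⟩, j, hj⟩ := And.intro hi hj
      rcases eq_or_ne i j with rfl | hij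
      · exact Or.inl (Or.inr ⟨i, hi, hj⟩)
      · exact Or.inl (Or.inl ⟨i, j, hij, hi, hj⟩)
    · exact Or.inr (Or.inr (by simpa only [mem_ofPred_eq, htrunc hj] using hv_large))
  · exact Or.inr (Or.inl (by simpa only [mem_ofPred_eq, htrunc hi] using hu_large))

end IndependentSamples

section SymmetricExhaustion

variable {E V : Type*} [MeasurableSpace E]
  [NormedAddCommGroup V] [InnerProductSpace ℝ V] [MeasurableSpace V] [BorelSpace V]
  [SecondCountableTopology V]

lemma charFun_map_sum_pi {ι : Type*} [Fintype ι] {ν : Measure E} [IsProbabilityMeasure ν]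
    {g : E → V} (hg : Measurable g) (θ : V) :
    charFun ((Measure.pi fun _ : ι => ν).map fun e => ∑ i, g (e i)) θ
      = (∫ e, Complex.exp (inner ℝ (g e) θ * Complex.I) ∂ν) ^ Fintype.card ι := by
  have hsum : Measurable fun e : ι → E => ∑ i, g (e i) :=
    Finset.measurable_fun_sum _ fun i _ => hg.comp (measurable_pi_apply i)
  rw [charFun_apply, integral_map hsum.aemeasurable (by fun_prop)]
  simp only [sum_inner, Complex.ofReal_sum, Finset.sum_mul, Complex.exp_sum]
  exact integral_fintype_prod_eq_pow (ι := ι)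
    fun e => Complex.exp (inner ℝ (g e) θ * Complex.I)

/-- A sequence of windows `W N` of mass `N` exhausting the infinite measure `Λ`, invariant under a
symmetry `σ` of `Λ`. Samples of size `N` drawn from the normalised restrictions `Λ[|W N]`
approximate the Poisson point process of intensity `Λ`. -/
structure IsSymmetricExhaustion (Λ : Measure E) (σ : E ≃ᵐ E) (W : ℕ → Set E) : Prop where
  measurePreserving : MeasurePreserving σ Λ Λ
  preimage_eq : ∀ N, σ ⁻¹' W N = W N
  aecover : AECover Λ atTop W
  measure_eq : ∀ N, Λ (W N) = N

namespace IsSymmetricExhaustion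

variable {Λ : Measure E} {σ : E ≃ᵐ E} {W : ℕ → Set E}

lemma isProbabilityMeasure_cond (hW : IsSymmetricExhaustion Λ σ W) {N : ℕ} (hN : N ≠ 0) :
    IsProbabilityMeasure Λ[|W N] :=
  cond_isProbabilityMeasure_of_finite (by simpa only [hW.measure_eq, ne_eq, Nat.cast_eq_zero])
    (by simp only [hW.measure_eq, ne_eq, ENNReal.natCast_ne_top, not_false_eq_true])

lemma smul_cond_le (hW : IsSymmetricExhaustion Λ σ W) {N : ℕ} (hN : N ≠ 0) :
    (Fintype.card (Fin N) : ℝ≥0∞) • Λ[|W N] ≤ Λ := by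
  rw [Fintype.card_fin, ProbabilityTheory.cond, hW.measure_eq, smul_smul,
    ENNReal.mul_inv_cancel (Nat.cast_ne_zero.2 hN) (ENNReal.natCast_ne_top N), one_smul]
  exact Measure.restrict_le_self

lemma measurePreserving_cond (hW : IsSymmetricExhaustion Λ σ W) (N : ℕ) :
    MeasurePreserving σ Λ[|W N] Λ[|W N] := by
  have h := hW.measurePreserving.restrict_preimage (hW.aecover.measurableSet N)
  rw [hW.preimage_eq] at h
  exact h.smul_measure _

lemma integral_cexp_cond (hW : IsSymmetricExhaustion Λ σ W) {φ : E → ℝ} (hφ : Measurable φ)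
    (hφ_odd : ∀ e, φ (σ e) = -φ e) {N : ℕ} (hN : N ≠ 0) :
    ∫ e, Complex.exp (φ e * Complex.I) ∂Λ[|W N]
      = 1 - (∫ e in W N, (1 - Real.cos (φ e)) ∂Λ : ℝ) / N := by
  have := hW.isProbabilityMeasure_cond hN
  have hcos_int : Integrable (fun e => Real.cos (φ e)) Λ[|W N] :=
    .of_bound (by fun_prop) 1 (ae_of_all _ fun e => Real.abs_cos_le_one _)
  have hsin_int : Integrable (fun e => Real.sin (φ e)) Λ[|W N] :=
    .of_bound (by fun_prop) 1 (ae_of_all _ fun e => Real.abs_sin_le_one _)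
  have hsin : ∫ e, Real.sin (φ e) ∂Λ[|W N] = 0 :=
    integral_eq_zero_of_odd (hW.measurePreserving_cond N) fun e => by rw [hφ_odd, Real.sin_neg]
  have hcos : ∫ e, Real.cos (φ e) ∂Λ[|W N]
      = 1 - (∫ e in W N, (1 - Real.cos (φ e)) ∂Λ) / N := by
    have h : ∫ e, (1 - Real.cos (φ e)) ∂Λ[|W N] = (∫ e in W N, (1 - Real.cos (φ e)) ∂Λ) / N := by
      rw [ProbabilityTheory.cond, integral_smul_measure, hW.measure_eq, ENNReal.toReal_inv,
        ENNReal.toReal_natCast, smul_eq_mul, div_eq_inv_mul]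
    rw [integral_sub (integrable_const _) hcos_int, integral_const, probReal_univ, one_smul] at h
    linarith
  calc ∫ e, Complex.exp (φ e * Complex.I) ∂Λ[|W N]
      = ∫ e, ((Real.cos (φ e) : ℂ) + (Real.sin (φ e) : ℂ) * Complex.I) ∂Λ[|W N] := by
        simp only [Complex.exp_mul_I, Complex.ofReal_cos, Complex.ofReal_sin]
    _ = 1 - (∫ e in W N, (1 - Real.cos (φ e)) ∂Λ : ℝ) / N := by
        rw [integral_add hcos_int.ofReal (hsin_int.ofReal.mul_const _), integral_mul_const,
          integral_complex_ofReal, integral_complex_ofReal, hsin, hcos]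
        push_cast
        ring

lemma tendsto_integral_cexp_cond_pow (hW : IsSymmetricExhaustion Λ σ W) {φ : E → ℝ}
    (hφ : Measurable φ) (hφ_odd : ∀ e, φ (σ e) = -φ e)
    (hφ_int : Integrable (fun e => 1 - Real.cos (φ e)) Λ) :
    Tendsto (fun N : ℕ => (∫ e, Complex.exp (φ e * Complex.I) ∂Λ[|W N]) ^ N) atTop
      (𝓝 (Complex.exp (-(∫ e, (1 - Real.cos (φ e)) ∂Λ : ℝ)))) := by
  have hlim : Tendsto (fun N : ℕ => (-(∫ e in W N, (1 - Real.cos (φ e)) ∂Λ : ℝ) : ℂ)) atTop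
      (𝓝 (-(∫ e, (1 - Real.cos (φ e)) ∂Λ : ℝ) : ℂ)) :=
    ((Complex.continuous_ofReal.tendsto _).comp
      (hW.aecover.integral_tendsto_of_countably_generated hφ_int)).neg
  have hpow := Complex.tendsto_one_add_pow_exp_of_tendsto
    (g := fun N : ℕ => -(∫ e in W N, (1 - Real.cos (φ e)) ∂Λ : ℝ) / (N : ℂ)) <|
    hlim.congr' <| (eventually_ne_atTop 0).mono fun N hN =>
      (mul_div_cancel₀ _ (Nat.cast_ne_zero.2 hN)).symm
  refine hpow.congr' ?_
  filter_upwards [eventually_ne_atTop 0] with N hN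
  rw [hW.integral_cexp_cond hφ hφ_odd hN]
  ring

-- By Lévy's continuity theorem the sample sums converge in law to `μ`, and the portmanteau theorem
-- transfers bounds on open sets to the limit.
lemma measure_le_of_isOpen [FiniteDimensional ℝ V] (hW : IsSymmetricExhaustion Λ σ W) {g : E → V}
    (hg : Measurable g) (hg_odd : ∀ e, g (σ e) = -g e) {μ : Measure V} [IsProbabilityMeasure μ]
    (hg_int : ∀ θ, Integrable (fun e => 1 - Real.cos (inner ℝ (g e) θ)) Λ)
    (hμ : ∀ θ, charFun μ θ = Complex.exp (-(∫ e, (1 - Real.cos (inner ℝ (g e) θ)) ∂Λ : ℝ)))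
    {O : Set V} (hO : IsOpen O) {B : ℝ≥0∞}
    (hB : ∀ N ≠ 0, Measure.pi (fun _ : Fin N => Λ[|W N]) {e | ∑ i, g (e i) ∈ O} ≤ B) :
    μ O ≤ B := by
  have hprob (N : ℕ) := hW.isProbabilityMeasure_cond N.succ_ne_zero
  have hsum (N : ℕ) : Measurable fun e : Fin N → E => ∑ i, g (e i) :=
    Finset.measurable_fun_sum _ fun i _ => hg.comp (measurable_pi_apply i)
  let law (N : ℕ) : ProbabilityMeasure V :=
    ⟨(Measure.pi fun _ : Fin (N + 1) => Λ[|W (N + 1)]).map fun e => ∑ i, g (e i),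
      Measure.isProbabilityMeasure_map (hsum _).aemeasurable⟩
  have hlaw : Tendsto law atTop (𝓝 ⟨μ, inferInstance⟩) := by
    refine ProbabilityMeasure.tendsto_iff_tendsto_charFun.2 fun θ => ?_
    simp only [law, ProbabilityMeasure.coe_mk, charFun_map_sum_pi hg, hμ, Fintype.card_fin]
    exact (tendsto_add_atTop_iff_nat 1).2 <| hW.tendsto_integral_cexp_cond_pow
      (hg.inner measurable_const) (fun e => by rw [hg_odd, inner_neg_left]) (hg_int θ)
  refine (ProbabilityMeasure.le_liminf_measure_open_of_tendsto hlaw hO).trans <|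
    (liminf_le_liminf (v := fun _ => B) (Eventually.of_forall fun N => ?_)).trans
      (liminf_const B).le
  simp only [law, ProbabilityMeasure.coe_mk]
  rw [Measure.map_apply (hsum _) hO.measurableSet]
  exact hB (N + 1) N.succ_ne_zero

end IsSymmetricExhaustion

end SymmetricExhaustion

section StableIntensity

/-- The jump size `sign r * |r| ^ (-1/α)`: it pushes Lebesgue measure on `ℝ` forward to a multiple
of the Lévy measure `|x| ^ (-1 - α) dx` of a symmetric `α`-stable law. -/
def stableJump (α r : ℝ) : ℝ := r * |r| ^ (-(1 / α) - 1)

/-- The exponent at `1` of the symmetric `α`-stable law with jumps `stableJump α`. -/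
def stableConst (α : ℝ) : ℝ≥0∞ := ∫⁻ r, ENNReal.ofReal (1 - Real.cos (stableJump α r))

/-- The jump `stableJump α r`, kept only for `r₀ ≤ |r|`, that is, if it is not too large. -/
def truncatedJump (α r₀ : ℝ) : ℝ → ℝ := {r | r₀ ≤ |r|}.indicator (stableJump α)

variable {α r₀ : ℝ}

@[fun_prop]
lemma measurable_stableJump : Measurable (stableJump α) := by
  unfold stableJump; fun_prop

@[fun_prop]
lemma measurable_truncatedJump : Measurable (truncatedJump α r₀) :=
  measurable_stableJump.indicator (measurableSet_le measurable_const measurable_abs)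

lemma stableJump_neg (r : ℝ) : stableJump α (-r) = -stableJump α r := by
  simp only [stableJump, abs_neg, neg_mul]

lemma truncatedJump_neg (r : ℝ) : truncatedJump α r₀ (-r) = -truncatedJump α r₀ r := by
  by_cases hr : r₀ ≤ |r| <;> simp [truncatedJump, hr, stableJump_neg]

lemma abs_stableJump {r : ℝ} (hr : r ≠ 0) : |stableJump α r| = |r| ^ (-(1 / α)) := by
  rw [stableJump, abs_mul, abs_of_nonneg (Real.rpow_nonneg (abs_nonneg r) _),
    Real.rpow_sub_one (abs_ne_zero.2 hr), mul_div_cancel₀ _ (abs_ne_zero.2 hr)]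

lemma stableJump_mul {c : ℝ} (hc : 0 < c) (r : ℝ) :
    stableJump α (c * r) = c ^ (-(1 / α)) * stableJump α r := by
  rw [stableJump, stableJump, abs_mul, abs_of_pos hc, Real.mul_rpow hc.le (abs_nonneg r),
    Real.rpow_sub_one hc.ne']
  field_simp

lemma lintegral_enorm_truncatedJump_rpow_lt_top (hα : 0 < α) {p : ℝ} (hp : α < p)
    (hr₀ : 0 < r₀) : ∫⁻ r, ‖truncatedJump α r₀ r‖ₑ ^ p < ⊤ := by
  have hpα : 1 < p / α := (one_lt_div hα).2 hp
  have hbound (r : ℝ) : ‖truncatedJump α r₀ r‖ₑ ^ p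
      ≤ ENNReal.ofReal ((1 / r₀ + 1) ^ (p / α)) * ENNReal.ofReal ((1 + ‖r‖) ^ (-(p / α))) := by
    by_cases hr : r₀ ≤ |r|
    · have hr_pos : 0 < |r| := hr₀.trans_le hr
      have hone : 1 ≤ 1 / r₀ * |r| := by
        rwa [one_div, ← div_eq_inv_mul, one_le_div hr₀]
      rw [truncatedJump, indicator_of_mem (show r ∈ {r | r₀ ≤ |r|} from hr),
        Real.enorm_eq_ofReal_abs, abs_stableJump (abs_pos.1 hr_pos),
        ENNReal.ofReal_rpow_of_nonneg (by positivity) (hα.trans hp).le,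
        ← ENNReal.ofReal_mul (by positivity), ← Real.rpow_mul (abs_nonneg r)]
      refine ENNReal.ofReal_le_ofReal ?_
      calc |r| ^ (-(1 / α) * p) = |r|⁻¹ ^ (p / α) := by
            rw [Real.inv_rpow hr_pos.le, ← Real.rpow_neg hr_pos.le]; ring_nf
        _ ≤ ((1 / r₀ + 1) / (1 + ‖r‖)) ^ (p / α) := by
            refine Real.rpow_le_rpow (by positivity) ?_ (by positivity)
            rw [inv_eq_one_div, div_le_div_iff₀ hr_pos (by positivity), Real.norm_eq_abs]
            linarith
        _ = (1 / r₀ + 1) ^ (p / α) * (1 + ‖r‖) ^ (-(p / α)) := by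
            rw [Real.div_rpow (by positivity) (by positivity), Real.rpow_neg (by positivity),
              div_eq_mul_inv]
    · rw [truncatedJump, indicator_of_notMem (show r ∉ {r | r₀ ≤ |r|} from hr), enorm_zero,
        ENNReal.zero_rpow_of_pos (hα.trans hp)]
      exact zero_le
  refine (lintegral_mono hbound).trans_lt ?_
  rw [lintegral_const_mul' _ _ ENNReal.ofReal_ne_top]
  exact ENNReal.mul_lt_top ENNReal.ofReal_lt_top
    (finite_integral_one_add_norm (by simpa only [Module.finrank_self, Nat.cast_one]))

lemma stableConst_ne_top (hα : 0 < α) (hα2 : α < 2) : stableConst α ≠ ⊤ := by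
  have hbound (r : ℝ) : ENNReal.ofReal (1 - Real.cos (stableJump α r))
      ≤ ‖truncatedJump α 1 r‖ₑ ^ (2 : ℝ) + (Ioo (-1) 1).indicator 2 r := by
    by_cases hr : 1 ≤ |r|
    · rw [truncatedJump, indicator_of_mem (show r ∈ {r | 1 ≤ |r|} from hr), ENNReal.rpow_two,
        ← enorm_pow, Real.enorm_of_nonneg (sq_nonneg _)]
      refine le_add_right (ENNReal.ofReal_le_ofReal ?_)
      linarith [Real.one_sub_sq_div_two_le_cos (x := stableJump α r), sq_nonneg (stableJump α r)]
    · rw [indicator_of_mem (show r ∈ Ioo (-1) 1 from abs_lt.1 (not_le.1 hr)), Pi.ofNat_apply,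
        ← ENNReal.ofReal_ofNat]
      exact le_add_left <| ENNReal.ofReal_le_ofReal <| by
        linarith [Real.neg_one_le_cos (stableJump α r)]
  refine ((lintegral_mono hbound).trans_lt ?_).ne
  rw [lintegral_add_left (by fun_prop), lintegral_indicator measurableSet_Ioo]
  refine ENNReal.add_lt_top.2 ⟨lintegral_enorm_truncatedJump_rpow_lt_top hα hα2 one_pos, ?_⟩
  simp only [Pi.ofNat_apply, lintegral_const, Measure.restrict_apply_univ, Real.volume_Ioo]
  finiteness

lemma stableConst_ne_zero (hα : 0 < α) : stableConst α ≠ 0 := by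
  have hsupport : Ioo (1 : ℝ) 2 ⊆
      Function.support fun r => ENNReal.ofReal (1 - Real.cos (stableJump α r)) := by
    intro r hr
    have hr_pos : 0 < r := one_pos.trans hr.1
    have habs := abs_stableJump (α := α) hr_pos.ne'
    rw [abs_of_pos hr_pos] at habs
    have hpos : 0 < |stableJump α r| := by rw [habs]; positivity
    have hlt : |stableJump α r| < 1 := by
      rw [habs]; exact Real.rpow_lt_one_of_one_lt_of_neg hr.1 (by simpa using hα)
    rw [Function.mem_support, ne_eq, ENNReal.ofReal_eq_zero, not_le, sub_pos, ← Real.cos_abs,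
      ← Real.cos_zero]
    exact Real.cos_lt_cos_of_nonneg_of_le_pi le_rfl (by linarith [Real.pi_gt_three]) hpos
  refine ((lintegral_pos_iff_support (by fun_prop)).2 ?_).ne'
  refine lt_of_lt_of_le ?_ (measure_mono hsupport)
  rw [Real.volume_Ioo]
  norm_num

lemma lintegral_one_sub_cos_stableJump_mul (hα : 0 < α) (y : ℝ) :
    ∫⁻ r, ENNReal.ofReal (1 - Real.cos (stableJump α r * y)) = stableConst α * ‖y‖ₑ ^ α := by
  rcases eq_or_ne y 0 with rfl | hy
  · simp [ENNReal.zero_rpow_of_pos hα]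
  have hy_pos : 0 < |y| := abs_pos.2 hy
  set c := |y| ^ (-α) with hc
  have hc_pos : 0 < c := by positivity
  have hc_rpow : c ^ (-(1 / α)) = |y| := by
    rw [hc, ← Real.rpow_mul hy_pos.le, show -α * -(1 / α) = 1 by field_simp, Real.rpow_one]
  have hcos (r : ℝ) : Real.cos (stableJump α r * y) = Real.cos (stableJump α (c * r)) := by
    rw [stableJump_mul hc_pos, hc_rpow, ← Real.cos_abs, ← Real.cos_abs (|y| * _), abs_mul,
      abs_mul, abs_abs, mul_comm]
  calc ∫⁻ r, ENNReal.ofReal (1 - Real.cos (stableJump α r * y))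
      = ∫⁻ r, ENNReal.ofReal (1 - Real.cos (stableJump α r)) ∂(volume.map (c * ·)) := by
        rw [lintegral_map (by fun_prop) (by fun_prop)]
        simp only [hcos]
    _ = stableConst α * ‖y‖ₑ ^ α := by
        rw [Real.map_volume_mul_left hc_pos.ne', lintegral_smul_measure, smul_eq_mul, mul_comm,
          abs_of_pos (inv_pos.2 hc_pos), hc, ← Real.rpow_neg hy_pos.le, neg_neg,
          Real.enorm_eq_ofReal_abs, ENNReal.ofReal_rpow_of_pos hy_pos, stableConst]

variable {S : Type*} [MeasurableSpace S]

/-- The intensity on `ℝ × S` of the Poisson point process whose integral of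
`stableJump α r * u s` has characteristic exponent `∫ |u| ^ α ∂m`. -/
def stableIntensity (α : ℝ) (m : Measure S) : Measure (ℝ × S) :=
  (stableConst α)⁻¹ • (volume.prod m)

/-- The part of `ℝ × S` over a symmetric interval, of `stableIntensity`-mass `N`. -/
def stableWindow (α : ℝ) (m : Measure S) (N : ℕ) : Set (ℝ × S) :=
  Ioo (-(N * ((stableConst α).toReal / (2 * m.real univ))))
    (N * ((stableConst α).toReal / (2 * m.real univ))) ×ˢ univ

/-- The symmetry `(r, s) ↦ (-r, s)` of `ℝ × S`. -/
def negFst (S : Type*) [MeasurableSpace S] : ℝ × S ≃ᵐ ℝ × S :=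
  (MeasurableEquiv.neg ℝ).prodCongr (MeasurableEquiv.refl S)

lemma negFst_apply (e : ℝ × S) : negFst S e = (-e.1, e.2) := rfl

variable {m : Measure S}

lemma lintegral_enorm_mul_rpow_stableIntensity [SFinite m] {κ : ℝ → ℝ} (hκ : Measurable κ)
    {u : S → ℝ} (hu : Measurable u) {p : ℝ} (hp : 0 ≤ p) :
    ∫⁻ e, ‖κ e.1 * u e.2‖ₑ ^ p ∂stableIntensity α m
      = (stableConst α)⁻¹ * (∫⁻ r, ‖κ r‖ₑ ^ p) * ∫⁻ s, ‖u s‖ₑ ^ p ∂m := by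
  simp only [enorm_mul, ENNReal.mul_rpow_of_nonneg _ _ hp]
  rw [stableIntensity, lintegral_smul_measure, smul_eq_mul, mul_assoc,
    lintegral_prod_mul (f := fun r => ‖κ r‖ₑ ^ p) (g := fun s => ‖u s‖ₑ ^ p)
      (by fun_prop) (by fun_prop)]

lemma lintegral_one_sub_cos_stableIntensity [SFinite m] (hα : 0 < α) (hα2 : α < 2) {u : S → ℝ}
    (hu : Measurable u) :
    ∫⁻ e, ENNReal.ofReal (1 - Real.cos (stableJump α e.1 * u e.2)) ∂stableIntensity α m
      = ∫⁻ s, ‖u s‖ₑ ^ α ∂m := by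
  rw [stableIntensity, lintegral_smul_measure, lintegral_prod_symm _ (by fun_prop), smul_eq_mul]
  simp only [lintegral_one_sub_cos_stableJump_mul hα]
  rw [lintegral_const_mul' _ _ (stableConst_ne_top hα hα2), ← mul_assoc,
    ENNReal.inv_mul_cancel (stableConst_ne_zero hα) (stableConst_ne_top hα hα2), one_mul]

lemma stableIntensity_abs_fst_lt [SFinite m] (r₀ : ℝ) :
    stableIntensity α m {e | |e.1| < r₀}
      = (stableConst α)⁻¹ * (ENNReal.ofReal (2 * r₀) * m univ) := by
  have hprod : {e : ℝ × S | |e.1| < r₀} = Ioo (-r₀) r₀ ×ˢ univ := by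
    ext e; simp only [abs_lt, mem_ofPred_eq, mem_prod, mem_Ioo, mem_univ, and_true]
  rw [stableIntensity, Measure.smul_apply, hprod, Measure.prod_prod, Real.volume_Ioo,
    smul_eq_mul, sub_neg_eq_add, ← two_mul]

lemma tendsto_stableIntensity_abs_fst_lt (hα : 0 < α) [IsFiniteMeasure m] :
    Tendsto (fun r₀ => stableIntensity α m {e | |e.1| < r₀}) (𝓝[>] 0) (𝓝 0) := by
  have hcont : Continuous fun r₀ : ℝ => ENNReal.ofReal (2 * r₀) :=
    ENNReal.continuous_ofReal.comp (continuous_const_mul 2)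
  have h := ENNReal.Tendsto.const_mul (a := (stableConst α)⁻¹)
    (ENNReal.Tendsto.mul_const (b := m univ) (hcont.tendsto 0) (.inr (measure_ne_top m univ)))
    (.inr (ENNReal.inv_ne_top.2 (stableConst_ne_zero hα)))
  simp only [mul_zero, ENNReal.ofReal_zero, zero_mul] at h
  simpa only [stableIntensity_abs_fst_lt] using h.mono_left nhdsWithin_le_nhds

lemma stableIntensity_stableWindow (hα : 0 < α) (hα2 : α < 2) [IsFiniteMeasure m] [NeZero m]
    (N : ℕ) : stableIntensity α m (stableWindow α m N) = N := by
  have hK := stableConst_ne_top hα hα2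
  have hK0 := stableConst_ne_zero hα
  have hm_pos : 0 < m.real univ := measureReal_univ_pos
  rw [stableIntensity, Measure.smul_apply, stableWindow, Measure.prod_prod, Real.volume_Ioo,
    smul_eq_mul, ← ofReal_measureReal (s := univ), ← ENNReal.ofReal_mul' hm_pos.le]
  have hlength : (N * ((stableConst α).toReal / (2 * m.real univ))
      - -(N * ((stableConst α).toReal / (2 * m.real univ)))) * m.real univ
      = N * (stableConst α).toReal := by
    field_simp; ring
  rw [hlength, ENNReal.ofReal_mul (Nat.cast_nonneg N), ENNReal.ofReal_natCast,
    ENNReal.ofReal_toReal hK, mul_left_comm, ENNReal.inv_mul_cancel hK0 hK, mul_one]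

lemma isSymmetricExhaustion_stableWindow (hα : 0 < α) (hα2 : α < 2) [IsFiniteMeasure m]
    [NeZero m] :
    IsSymmetricExhaustion (stableIntensity α m) (negFst S) (stableWindow α m) where
  measurePreserving :=
    ((Measure.measurePreserving_neg volume).prod (MeasurePreserving.id m)).smul_measure _
  preimage_eq N := by
    ext e
    simp only [stableWindow, mem_preimage, negFst_apply, mem_prod, mem_Ioo, mem_univ,
      neg_lt_neg_iff, neg_lt (a := e.1), and_comm]
  aecover := by
    have hwidth : 0 < (stableConst α).toReal / (2 * m.real univ) :=
      div_pos (ENNReal.toReal_pos (stableConst_ne_zero hα) (stableConst_ne_top hα hα2))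
        (mul_pos two_pos (measureReal_univ_pos))
    refine ⟨ae_of_all _ fun e => ?_, fun N => measurableSet_Ioo.prod .univ⟩
    filter_upwards [(tendsto_natCast_atTop_atTop.atTop_mul_const hwidth).eventually_gt_atTop |e.1|]
      with N hN
    exact ⟨abs_lt.1 hN, mem_univ _⟩
  measure_eq := stableIntensity_stableWindow hα hα2

end StableIntensity

section SampleEstimate

variable {S : Type*} [MeasurableSpace S] {m : Measure S}

lemma lintegral_enorm_const_mul_rpow (c : ℝ) (u : S → ℝ) {p : ℝ} (hp : 0 ≤ p) :
    ∫⁻ s, ‖c * u s‖ₑ ^ p ∂m = ‖c‖ₑ ^ p * ∫⁻ s, ‖u s‖ₑ ^ p ∂m := by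
  simp only [enorm_mul, ENNReal.mul_rpow_of_nonneg _ _ hp]
  exact lintegral_const_mul' _ _ (ENNReal.rpow_ne_top_of_nonneg hp enorm_ne_top)

lemma lintegral_enorm_rpow_le_of_le {u : S → ℝ} (hu : AEStronglyMeasurable u m) {q p : ℝ}
    (hq : 0 < q) (hqp : q ≤ p) :
    ∫⁻ s, ‖u s‖ₑ ^ q ∂m ≤ (∫⁻ s, ‖u s‖ₑ ^ p ∂m) ^ (q / p) * m univ ^ (1 - q / p) := by
  have hp : 0 < p := hq.trans_le hqp
  calc ∫⁻ s, ‖u s‖ₑ ^ q ∂m = eLpNorm' u q m ^ q := by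
        rw [eLpNorm', ← ENNReal.rpow_mul, one_div_mul_cancel hq.ne', ENNReal.rpow_one]
    _ ≤ (eLpNorm' u p m * m univ ^ (1 / q - 1 / p)) ^ q := by
        gcongr
        exact eLpNorm'_le_eLpNorm'_mul_rpow_measure_univ hq hqp hu
    _ = (∫⁻ s, ‖u s‖ₑ ^ p ∂m) ^ (q / p) * m univ ^ (1 - q / p) := by
        rw [ENNReal.mul_rpow_of_nonneg _ _ hq.le, eLpNorm', ← ENNReal.rpow_mul,
          ← ENNReal.rpow_mul]
        congr 2 <;> field_simp

variable {α p₁ p₂ r₀ : ℝ}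

/-- The `p`-th moment of the truncated jumps under the intensity, per unit mass of `S`. -/
def truncatedMoment (α r₀ p : ℝ) : ℝ≥0∞ :=
  (stableConst α)⁻¹ * ∫⁻ r, ‖truncatedJump α r₀ r‖ₑ ^ p

lemma truncatedMoment_ne_top (hα : 0 < α) (hr₀ : 0 < r₀) {p : ℝ} (hp : α < p) :
    truncatedMoment α r₀ p ≠ ⊤ :=
  ENNReal.mul_ne_top (ENNReal.inv_ne_top.2 (stableConst_ne_zero hα))
    (lintegral_enorm_truncatedJump_rpow_lt_top hα hp hr₀).ne

lemma lintegral_enorm_truncatedJump_mul_rpow [SFinite m] {u : S → ℝ} (hu : Measurable u) {p : ℝ}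
    (hp : 0 ≤ p) :
    ∫⁻ e, ‖truncatedJump α r₀ e.1 * u e.2‖ₑ ^ p ∂stableIntensity α m
      = truncatedMoment α r₀ p * ∫⁻ s, ‖u s‖ₑ ^ p ∂m :=
  lintegral_enorm_mul_rpow_stableIntensity (by fun_prop) hu hp

lemma lintegral_enorm_truncatedJump_mul_mul_rpow [SFinite m] {u v : S → ℝ} (hu : Measurable u)
    (hv : Measurable v) {p : ℝ} (hp : 0 ≤ p) :
    ∫⁻ e, ‖truncatedJump α r₀ e.1 * u e.2 * (truncatedJump α r₀ e.1 * v e.2)‖ₑ ^ p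
        ∂stableIntensity α m
      = truncatedMoment α r₀ (2 * p) * ∫⁻ s, ‖u s * v s‖ₑ ^ p ∂m := by
  have h := lintegral_enorm_mul_rpow_stableIntensity (α := α) (m := m)
    (κ := fun r => truncatedJump α r₀ r ^ 2) (u := fun s => u s * v s) (by fun_prop)
    (by fun_prop) hp
  simp only [enorm_pow, ← ENNReal.rpow_two, ← ENNReal.rpow_mul] at h
  rw [truncatedMoment, ← h]
  simp only [mul_mul_mul_comm _ (u _), sq]

lemma lintegral_enorm_truncatedJump_mul_rpow_rpow_le [SFinite m] {q : ℝ} (hq : 0 < q)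
    (hqp : q ≤ p₁) {u : S → ℝ} (hu : Measurable u) {A : ℝ≥0∞}
    (hA : ∫⁻ s, ‖u s‖ₑ ^ p₁ ∂m ≤ A) :
    (∫⁻ e, ‖truncatedJump α r₀ e.1 * u e.2‖ₑ ^ q ∂stableIntensity α m) ^ (2 * p₁ / q)
      ≤ (truncatedMoment α r₀ q * m univ ^ (1 - q / p₁)) ^ (2 * p₁ / q) * A ^ 2 := by
  have hp₁ : 0 < p₁ := hq.trans_le hqp
  have hexp : q / p₁ * (2 * p₁ / q) = 2 := by field_simp
  calc (∫⁻ e, ‖truncatedJump α r₀ e.1 * u e.2‖ₑ ^ q ∂stableIntensity α m) ^ (2 * p₁ / q)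
      ≤ (truncatedMoment α r₀ q * (A ^ (q / p₁) * m univ ^ (1 - q / p₁))) ^ (2 * p₁ / q) := by
        rw [lintegral_enorm_truncatedJump_mul_rpow hu hq.le]
        gcongr
        refine (lintegral_enorm_rpow_le_of_le hu.aestronglyMeasurable hq hqp).trans ?_
        gcongr
    _ = _ := by
        rw [mul_left_comm, mul_comm, ENNReal.mul_rpow_of_nonneg _ _ (by positivity),
          ← ENNReal.rpow_mul, hexp, ENNReal.rpow_two]

variable [IsFiniteMeasure m] [NeZero m]

lemma exists_measure_pi_lt_abs_sum_truncatedJump_le (hα : 0 < α) (hα2 : α < 2) (hp₁ : α < p₁)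
    (hp₂ : α / 2 < p₂) (hr₀ : 0 < r₀) :
    ∃ L > 0, ∃ C : ℝ≥0∞, C ≠ ⊤ ∧ ∀ N ≠ 0, ∀ {u v : S → ℝ}, Measurable u → Measurable v →
      ∀ {A B : ℝ≥0∞}, ∫⁻ s, ‖u s‖ₑ ^ p₁ ∂m ≤ A → ∫⁻ s, ‖v s‖ₑ ^ p₁ ∂m ≤ A →
        ∫⁻ s, ‖u s * v s‖ₑ ^ p₂ ∂m ≤ B →
        Measure.pi (fun _ : Fin N => (stableIntensity α m)[|stableWindow α m N])
          {e | L < |∑ i, truncatedJump α r₀ (e i).1 * u (e i).2| ∧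
            L < |∑ i, truncatedJump α r₀ (e i).1 * v (e i).2|} ≤ C * (A ^ 2 + B) := by
  have hp₁0 : 0 < p₁ := hα.trans hp₁
  have hp₂0 : 0 < p₂ := (half_pos hα).trans hp₂
  set q := min 2 p₁
  have hqp : q ≤ p₁ := min_le_right 2 p₁
  have hαq : α < q := lt_min hα2 hp₁
  have hq0 : 0 < q := hα.trans hαq
  have hL0 : 0 < 2 * p₁ / q := by positivity
  set M := truncatedMoment α r₀ with hM
  set D : ℝ≥0∞ := (M q * m univ ^ (1 - q / p₁)) ^ (2 * p₁ / q)
  have hmass : m univ ^ (1 - q / p₁) ≠ ⊤ := ENNReal.rpow_ne_top_of_nonneg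
    (sub_nonneg.2 ((div_le_one hp₁0).2 hqp)) (measure_ne_top m univ)
  have hD_top : D ≠ ⊤ := ENNReal.rpow_ne_top_of_nonneg hL0.le
    (ENNReal.mul_ne_top (truncatedMoment_ne_top hα hr₀ hαq) hmass)
  have hMp₁ : M p₁ ≠ ⊤ := truncatedMoment_ne_top hα hr₀ hp₁
  have hMp₂ : M (2 * p₂) ≠ ⊤ := truncatedMoment_ne_top hα hr₀ (by linarith)
  refine ⟨2 * (2 * p₁ / q), by positivity,
    M p₁ ^ 2 + 2 * ENNReal.ofReal (Real.exp 2) * (D + D) + M (2 * p₂), by finiteness,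
    fun N hN u v hu hv A B hA hA' hB => ?_⟩
  have hW := isSymmetricExhaustion_stableWindow (m := m) hα hα2
  have := hW.isProbabilityMeasure_cond hN
  have hodd (w : S → ℝ) (e : ℝ × S) : truncatedJump α r₀ (negFst S e).1 * w (negFst S e).2
      = -(truncatedJump α r₀ e.1 * w e.2) := by
    rw [negFst_apply, truncatedJump_neg, neg_mul]
  have h := measure_pi_lt_abs_sum_and_lt_abs_sum_le (hW.smul_cond_le hN)
    (hW.measurePreserving_cond N) (u := fun e => truncatedJump α r₀ e.1 * u e.2)
    (v := fun e => truncatedJump α r₀ e.1 * v e.2) (by fun_prop) (by fun_prop) (hodd u)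
    (hodd v) hp₁0.le hp₂0.le (min_le_left 2 p₁) hL0
  rw [lintegral_enorm_truncatedJump_mul_rpow hu hp₁0.le,
    lintegral_enorm_truncatedJump_mul_rpow hv hp₁0.le,
    lintegral_enorm_truncatedJump_mul_mul_rpow hu hv hp₂0.le, ← hM] at h
  calc _ ≤ M p₁ * A * (M p₁ * A) + M (2 * p₂) * B
        + 2 * ENNReal.ofReal (Real.exp 2) * (D * A ^ 2 + D * A ^ 2) := by
        refine h.trans ?_
        gcongr
        exacts [lintegral_enorm_truncatedJump_mul_rpow_rpow_le hq0 hqp hu hA,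
          lintegral_enorm_truncatedJump_mul_rpow_rpow_le hq0 hqp hv hA']
    _ = (M p₁ ^ 2 + 2 * ENNReal.ofReal (Real.exp 2) * (D + D)) * A ^ 2 + M (2 * p₂) * B := by ring
    _ ≤ _ := by
        rw [mul_add (_ + _)]
        exact add_le_add (mul_le_mul_left le_self_add _) (mul_le_mul_left le_add_self _)

lemma exists_measure_pi_lt_abs_sum_truncatedJump_le_rpow (hα : 0 < α) (hα2 : α < 2)
    (hp₁ : α < p₁) (hp₂ : α / 2 < p₂) (hr₀ : 0 < r₀) :
    ∃ C : ℝ≥0∞, C ≠ ⊤ ∧ ∀ N ≠ 0, ∀ {u v : S → ℝ}, Measurable u → Measurable v →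
      ∀ {A B : ℝ≥0∞}, ∫⁻ s, ‖u s‖ₑ ^ p₁ ∂m ≤ A → ∫⁻ s, ‖v s‖ₑ ^ p₁ ∂m ≤ A →
        ∫⁻ s, ‖u s * v s‖ₑ ^ p₂ ∂m ≤ B → ∀ {l : ℝ}, 0 < l →
        Measure.pi (fun _ : Fin N => (stableIntensity α m)[|stableWindow α m N])
          {e | l < |∑ i, truncatedJump α r₀ (e i).1 * u (e i).2| ∧
            l < |∑ i, truncatedJump α r₀ (e i).1 * v (e i).2|}
          ≤ C * (‖l‖ₑ ^ (-(2 * p₁)) * A ^ 2 + ‖l‖ₑ ^ (-(2 * p₂)) * B) := by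
  obtain ⟨L, hL, C, hC, hbound⟩ :=
    exists_measure_pi_lt_abs_sum_truncatedJump_le (m := m) hα hα2 hp₁ hp₂ hr₀
  have hp₁0 : 0 < p₁ := hα.trans hp₁
  have hp₂0 : 0 < p₂ := (half_pos hα).trans hp₂
  have hL_top {p : ℝ} (hp : 0 ≤ p) : ‖L‖ₑ ^ p ≠ ⊤ :=
    ENNReal.rpow_ne_top_of_nonneg hp enorm_ne_top
  have htop₁ := hL_top (p := 2 * p₁) (by positivity)
  have htop₂ := hL_top (p := 2 * p₂) (by positivity)
  refine ⟨C * (‖L‖ₑ ^ (2 * p₁) + ‖L‖ₑ ^ (2 * p₂)), by finiteness,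
    fun N hN u v hu hv A B hA hA' hB l hl => ?_⟩
  set c : ℝ := L / l with hc
  have hc_pos : 0 < c := by positivity
  have hc_rpow {p : ℝ} (hp : 0 < p) : ‖c‖ₑ ^ p = ‖L‖ₑ ^ p * ‖l‖ₑ ^ (-p) := by
    rw [hc, div_eq_mul_inv, enorm_mul, ENNReal.mul_rpow_of_nonneg _ _ hp.le, enorm_inv hl.ne',
      ENNReal.inv_rpow, ENNReal.rpow_neg]
  have hlevel (w : S → ℝ) (e : Fin N → ℝ × S) :
      L < |∑ i, truncatedJump α r₀ (e i).1 * (c * w (e i).2)|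
        ↔ l < |∑ i, truncatedJump α r₀ (e i).1 * w (e i).2| := by
    simp only [mul_left_comm _ c, ← Finset.mul_sum]
    rw [abs_mul, abs_of_pos hc_pos, hc, div_mul_eq_mul_div, lt_div_iff₀ hl,
      mul_lt_mul_iff_right₀ hL]
  have hsingle {w : S → ℝ} (hwA : ∫⁻ s, ‖w s‖ₑ ^ p₁ ∂m ≤ A) :
      ∫⁻ s, ‖c * w s‖ₑ ^ p₁ ∂m ≤ ‖c‖ₑ ^ p₁ * A := by
    rw [lintegral_enorm_const_mul_rpow c w hp₁0.le]
    gcongr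
  have hproduct : ∫⁻ s, ‖c * u s * (c * v s)‖ₑ ^ p₂ ∂m ≤ ‖c‖ₑ ^ (2 * p₂) * B := by
    simp only [mul_mul_mul_comm _ (u _), ← sq]
    rw [lintegral_enorm_const_mul_rpow _ _ hp₂0.le, enorm_pow, ← ENNReal.rpow_two,
      ← ENNReal.rpow_mul]
    gcongr
  have h := hbound N hN (hu.const_mul c) (hv.const_mul c) (hsingle hA) (hsingle hA') hproduct
  simp only [hlevel] at h
  calc _ ≤ C * ((‖c‖ₑ ^ p₁ * A) ^ 2 + ‖c‖ₑ ^ (2 * p₂) * B) := h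
    _ = C * (‖L‖ₑ ^ (2 * p₁) * (‖l‖ₑ ^ (-(2 * p₁)) * A ^ 2)
          + ‖L‖ₑ ^ (2 * p₂) * (‖l‖ₑ ^ (-(2 * p₂)) * B)) := by
        rw [mul_pow, ← ENNReal.rpow_two, ← ENNReal.rpow_mul, mul_comm p₁ 2,
          hc_rpow (by positivity), hc_rpow (by positivity), mul_assoc, mul_assoc]
    _ ≤ _ := by
        rw [mul_assoc C, mul_add (_ + _)]
        gcongr
        exacts [le_self_add, le_add_self]

end SampleEstimate

section SpectralRepresentation

variable {S Ω T : Type*} [MeasurableSpace S] [MeasurableSpace Ω] {m : Measure S} {P : Measure Ω}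
  {α : ℝ}

lemma lintegral_ofReal_abs_rpow (u : S → ℝ) {p : ℝ} (hp : 0 ≤ p) :
    ∫⁻ s, ENNReal.ofReal (|u s| ^ p) ∂m = ∫⁻ s, ‖u s‖ₑ ^ p ∂m := by
  simp only [Real.enorm_eq_ofReal_abs, ENNReal.ofReal_rpow_of_nonneg (abs_nonneg _) hp]

lemma memLp_ofReal_iff {u : S → ℝ} (hu : Measurable u) (hα : 0 < α) :
    MemLp u (ENNReal.ofReal α) m ↔ ∫⁻ s, ‖u s‖ₑ ^ α ∂m < ⊤ := by
  rw [MemLp, eLpNorm_lt_top_iff_lintegral_rpow_enorm_lt_top (ENNReal.ofReal_pos.2 hα).ne'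
    ENNReal.ofReal_ne_top, ENNReal.toReal_ofReal hα.le]
  exact and_iff_right hu.aestronglyMeasurable

lemma integral_one_sub_cos_stableIntensity [SFinite m] (hα : 0 < α) (hα2 : α < 2) {u : S → ℝ}
    (hu : Measurable u) :
    ∫ e, (1 - Real.cos (stableJump α e.1 * u e.2)) ∂stableIntensity α m = ∫ s, |u s| ^ α ∂m := by
  rw [integral_eq_lintegral_of_nonneg_ae
      (ae_of_all _ fun e => sub_nonneg.2 (Real.cos_le_one _)) (by fun_prop),
    integral_eq_lintegral_of_nonneg_ae
      (ae_of_all _ fun s => Real.rpow_nonneg (abs_nonneg _) _)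
      (hu.abs.pow_const α).aestronglyMeasurable,
    lintegral_one_sub_cos_stableIntensity hα hα2 hu, lintegral_ofReal_abs_rpow u hα.le]

lemma integrable_one_sub_cos_stableIntensity [SFinite m] (hα : 0 < α) (hα2 : α < 2) {u : S → ℝ}
    (hu : Measurable u) (hu_memLp : MemLp u (ENNReal.ofReal α) m) :
    Integrable (fun e => 1 - Real.cos (stableJump α e.1 * u e.2)) (stableIntensity α m) := by
  refine ⟨by fun_prop, ?_⟩
  rw [hasFiniteIntegral_iff_ofReal (ae_of_all _ fun e => sub_nonneg.2 (Real.cos_le_one _)),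
    lintegral_one_sub_cos_stableIntensity hα hα2 hu]
  exact (memLp_ofReal_iff hu hα).1 hu_memLp

/-- `X` is a symmetric `α`-stable process with spectral representation `(f, m)`. -/
structure HasSpectralRepresentation (X : Ω → T → ℝ) (α : ℝ) (f : T → S → ℝ) (m : Measure S)
    (P : Measure Ω) : Prop where
  measurable_kernel : ∀ t, Measurable (f t)
  memLp_kernel : ∀ t, MemLp (f t) (ENNReal.ofReal α) m
  measurable : ∀ t, Measurable fun ω => X ω t
  integral_cexp_fin : ∀ (n : ℕ) (t : Fin n → T) (θ : Fin n → ℝ),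
    ∫ ω, Complex.exp (Complex.I * ((∑ k, θ k * X ω (t k) : ℝ) : ℂ)) ∂P
      = Complex.exp (-(((∫ s, |∑ k, θ k * f (t k) s| ^ α ∂m : ℝ)) : ℂ))

namespace HasSpectralRepresentation

variable {X : Ω → T → ℝ} {f : T → S → ℝ}

lemma comp {T' : Type*} (h : HasSpectralRepresentation X α f m P) (φ : T' → T) :
    HasSpectralRepresentation (fun ω t => X ω (φ t)) α (fun t => f (φ t)) m P where
  measurable_kernel t := h.measurable_kernel (φ t)
  memLp_kernel t := h.memLp_kernel (φ t)
  measurable t := h.measurable (φ t)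
  integral_cexp_fin n t := h.integral_cexp_fin n (φ ∘ t)

lemma integral_cexp {ι : Type*} [Fintype ι] (h : HasSpectralRepresentation X α f m P)
    (t : ι → T) (θ : ι → ℝ) :
    ∫ ω, Complex.exp (Complex.I * ((∑ i, θ i * X ω (t i) : ℝ) : ℂ)) ∂P
      = Complex.exp (-(((∫ s, |∑ i, θ i * f (t i) s| ^ α ∂m : ℝ)) : ℂ)) := by
  let e := (Fintype.equivFin ι).symm
  have hX (ω : Ω) : ∑ k, θ (e k) * X ω (t (e k)) = ∑ i, θ i * X ω (t i) :=
    e.sum_comp fun i => θ i * X ω (t i)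
  have hf (s : S) : ∑ k, θ (e k) * f (t (e k)) s = ∑ i, θ i * f (t i) s :=
    e.sum_comp fun i => θ i * f (t i) s
  simpa only [Function.comp_apply, hX, hf] using h.integral_cexp_fin _ (t ∘ e) (θ ∘ e)

lemma increments (h : HasSpectralRepresentation X α f m P) :
    HasSpectralRepresentation (fun ω (p : T × T) => X ω p.2 - X ω p.1) α
      (fun p s => f p.2 s - f p.1 s) m P where
  measurable_kernel p := (h.measurable_kernel p.2).sub (h.measurable_kernel p.1)
  memLp_kernel p := (h.memLp_kernel p.2).sub (h.memLp_kernel p.1)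
  measurable p := (h.measurable p.2).sub (h.measurable p.1)
  integral_cexp_fin n t θ := by
    have hsum := h.integral_cexp (ι := Fin n ⊕ Fin n)
      (Sum.elim (fun k => (t k).2) fun k => (t k).1) (Sum.elim θ (-θ))
    simpa only [Fintype.sum_sum_type, Sum.elim_inl, Sum.elim_inr, Pi.neg_apply, neg_mul,
      Finset.sum_neg_distrib, ← sub_eq_add_neg, ← Finset.sum_sub_distrib, ← mul_sub] using hsum

lemma integral_cexp_mul (h : HasSpectralRepresentation X α f m P) (t : T) (θ : ℝ) :
    ∫ ω, Complex.exp (Complex.I * ((θ * X ω t : ℝ) : ℂ)) ∂P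
      = Complex.exp (-(((∫ s, |θ * f t s| ^ α ∂m : ℝ)) : ℂ)) := by
  simpa only [Finset.univ_unique, Finset.sum_singleton] using
    h.integral_cexp (ι := Unit) (fun _ => t) fun _ => θ

lemma charFun_map_toLp {ι : Type*} [Fintype ι] (h : HasSpectralRepresentation X α f m P)
    (t : ι → T) (θ : EuclideanSpace ℝ ι) :
    charFun (P.map fun ω => WithLp.toLp 2 fun i => X ω (t i)) θ
      = Complex.exp (-(((∫ s, |∑ i, θ i * f (t i) s| ^ α ∂m : ℝ)) : ℂ)) := by
  have hX : Measurable fun ω => WithLp.toLp 2 fun i => X ω (t i) :=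
    (WithLp.measurable_toLp 2 _).comp (measurable_pi_lambda _ fun i => h.measurable (t i))
  rw [← h.integral_cexp t θ, charFun_apply, integral_map hX.aemeasurable (by fun_prop)]
  simp only [PiLp.inner_apply, RCLike.inner_apply, conj_trivial, mul_comm Complex.I]

variable [IsFiniteMeasure m] [NeZero m] [IsProbabilityMeasure P]

lemma measure_le_of_isOpen {ι : Type*} [Finite ι] (h : HasSpectralRepresentation X α f m P)
    (hα : 0 < α) (hα2 : α < 2) (t : ι → T) {O : Set (ι → ℝ)} (hO : IsOpen O) {B : ℝ≥0∞}
    (hB : ∀ N ≠ 0, Measure.pi (fun _ : Fin N => (stableIntensity α m)[|stableWindow α m N])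
      {e | (fun i => ∑ j, stableJump α (e j).1 * f (t i) (e j).2) ∈ O} ≤ B) :
    P {ω | (fun i => X ω (t i)) ∈ O} ≤ B := by
  have := Fintype.ofFinite ι
  have hf := h.measurable_kernel
  let Z (ω : Ω) : EuclideanSpace ℝ ι := WithLp.toLp 2 fun i => X ω (t i)
  let g (e : ℝ × S) : EuclideanSpace ℝ ι := WithLp.toLp 2 fun i => stableJump α e.1 * f (t i) e.2
  let u (θ : EuclideanSpace ℝ ι) (s : S) : ℝ := ∑ i, θ i * f (t i) s
  have hu (θ : EuclideanSpace ℝ ι) : Measurable (u θ) := by fun_prop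
  have hZ : Measurable Z := (WithLp.measurable_toLp 2 _).comp
    (measurable_pi_lambda _ fun i => h.measurable (t i))
  have hg : Measurable g := (WithLp.measurable_toLp 2 _).comp (by fun_prop)
  have hg_odd (e : ℝ × S) : g (negFst S e) = -g e := by
    ext i
    simp only [g, negFst_apply, stableJump_neg, neg_mul, PiLp.neg_apply]
  have hinner (e : ℝ × S) (θ : EuclideanSpace ℝ ι) :
      inner ℝ (g e) θ = stableJump α e.1 * u θ e.2 := by
    simp only [g, u, PiLp.inner_apply, RCLike.inner_apply, conj_trivial, Finset.mul_sum]
    exact Finset.sum_congr rfl fun i _ => by ring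
  have := Measure.isProbabilityMeasure_map (μ := P) hZ.aemeasurable
  have hO' := hO.preimage (PiLp.continuous_ofLp 2 fun _ : ι => ℝ)
  have hPZ : P {ω | (fun i => X ω (t i)) ∈ O} = P.map Z (WithLp.ofLp ⁻¹' O) :=
    (Measure.map_apply hZ hO'.measurableSet).symm
  rw [hPZ]
  refine (isSymmetricExhaustion_stableWindow hα hα2).measure_le_of_isOpen hg hg_odd
    (fun θ => ?_) (fun θ => ?_) hO' fun N hN => (measure_mono fun e he => ?_).trans (hB N hN)
  · simp only [hinner]
    exact integrable_one_sub_cos_stableIntensity hα hα2 (hu θ) <|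
      memLp_finsetSum _ fun i _ => (h.memLp_kernel (t i)).const_mul _
  · simp only [hinner]
    rw [h.charFun_map_toLp, integral_one_sub_cos_stableIntensity hα hα2 (hu θ)]
  · simpa only [g, mem_preimage, WithLp.ofLp_sum, Finset.sum_fn] using he

end HasSpectralRepresentation

end SpectralRepresentation

section BorelCantelli

variable {Ω : Type*} [MeasurableSpace Ω] {μ : Measure Ω}

lemma measure_limsup_le_of_biUnion_le {A : ℕ → Set Ω} {c : ℝ≥0∞} {b : ℕ → ℝ≥0∞}
    (hb : ∑' n, b n ≠ ⊤) (hA : ∀ F : Finset ℕ, μ (⋃ n ∈ F, A n) ≤ c + ∑ n ∈ F, b n) :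
    μ (limsup A atTop) ≤ c := by
  have htail (N : ℕ) : μ (limsup A atTop) ≤ c + ∑' n, b (n + N) := by
    rw [limsup_eq_iInf_iSup_of_nat']
    refine (measure_mono (iInf_le _ N)).trans ?_
    rw [iSup_eq_iUnion, measure_iUnion_eq_iSup_accumulate]
    refine iSup_le fun n => ?_
    have h := hA ((Finset.range (n + 1)).map (addRightEmbedding N))
    rw [Finset.sum_map] at h
    refine (measure_mono ?_).trans (h.trans (add_le_add_right (ENNReal.sum_le_tsum _) c))
    intro ω hω
    obtain ⟨k, hk, hωk⟩ := mem_accumulate.1 hω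
    exact mem_biUnion (Finset.mem_map_of_mem _ (Finset.mem_range.2 (Nat.lt_succ_of_le hk))) hωk
  have hlim := (tendsto_const_nhds (x := c)).add (ENNReal.tendsto_sum_nat_add b hb)
  rw [add_zero] at hlim
  exact ge_of_tendsto' hlim htail

end BorelCantelli

section Chaining

variable {S Ω T : Type*} [MeasurableSpace S] [MeasurableSpace Ω] {m : Measure S}
  [IsFiniteMeasure m] [NeZero m] {P : Measure Ω} [IsProbabilityMeasure P] {X : Ω → T → ℝ}
  {f : T → S → ℝ} {α p₁ p₂ r₀ : ℝ}

namespace HasSpectralRepresentation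

lemma exists_measure_lt_abs_and_lt_abs_le (h : HasSpectralRepresentation X α f m P) (hα : 0 < α)
    (hα2 : α < 2) (hp₁ : α < p₁) (hp₂ : α / 2 < p₂) (hr₀ : 0 < r₀) :
    ∃ C : ℝ≥0∞, C ≠ ⊤ ∧ ∀ {κ : Type} [Fintype κ] {t t' : κ → T} {l : κ → ℝ} {A B : κ → ℝ≥0∞},
      (∀ k, 0 < l k) → (∀ k, ∫⁻ s, ‖f (t k) s‖ₑ ^ p₁ ∂m ≤ A k) →
      (∀ k, ∫⁻ s, ‖f (t' k) s‖ₑ ^ p₁ ∂m ≤ A k) →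
      (∀ k, ∫⁻ s, ‖f (t k) s * f (t' k) s‖ₑ ^ p₂ ∂m ≤ B k) →
      P {ω | ∃ k, l k < |X ω (t k)| ∧ l k < |X ω (t' k)|}
        ≤ stableIntensity α m {e | |e.1| < r₀}
          + ∑ k, C * (‖l k‖ₑ ^ (-(2 * p₁)) * A k ^ 2 + ‖l k‖ₑ ^ (-(2 * p₂)) * B k) := by
  obtain ⟨C, hC, hbound⟩ :=
    exists_measure_pi_lt_abs_sum_truncatedJump_le_rpow (m := m) hα hα2 hp₁ hp₂ hr₀
  refine ⟨C, hC, fun {κ _ t t' l A B} hl hA hA' hB => ?_⟩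
  have hopen : IsOpen {x : κ ⊕ κ → ℝ | ∃ k, l k < |x (.inl k)| ∧ l k < |x (.inr k)|} := by
    have hlt (i : κ ⊕ κ) (c : ℝ) : IsOpen {x : κ ⊕ κ → ℝ | c < |x i|} :=
      isOpen_lt continuous_const (by fun_prop)
    simp only [ofPred_exists]
    exact isOpen_iUnion fun k => (hlt _ _).inter (hlt _ _)
  refine h.measure_le_of_isOpen hα hα2 (Sum.elim t t') hopen fun N hN => ?_
  have hW := isSymmetricExhaustion_stableWindow (m := m) hα hα2
  have := hW.isProbabilityMeasure_cond hN
  have hlarge := measure_pi_exists_mem_le (hW.smul_cond_le hN) (A := {e : ℝ × S | |e.1| < r₀})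
    (measurableSet_lt (by fun_prop) (by fun_prop))
  have hpairs := (measure_iUnion_fintype_le _ _).trans <| Finset.sum_le_sum fun k _ =>
    hbound N hN (h.measurable_kernel (t k)) (h.measurable_kernel (t' k)) (hA k) (hA' k) (hB k)
      (hl k)
  refine (measure_mono fun e he => ?_).trans
    ((measure_union_le _ _).trans (add_le_add hlarge hpairs))
  obtain ⟨k, hk⟩ := he
  by_cases hsmall : ∃ i, |(e i).1| < r₀
  · exact .inl hsmall
  · push Not at hsmall
    have htrunc (i) : truncatedJump α r₀ (e i).1 = stableJump α (e i).1 :=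
      indicator_of_mem (show (e i).1 ∈ {r | r₀ ≤ |r|} from hsmall i) _
    refine .inr (mem_iUnion.2 ⟨k, ?_⟩)
    simp only [mem_ofPred_eq, htrunc]
    exact hk

lemma ae_eventually_forall_abs_le (h : HasSpectralRepresentation X α f m P) (hα : 0 < α)
    (hα2 : α < 2) (hp₁ : α < p₁) (hp₂ : α / 2 < p₂) {d : ℕ → ℕ} {t t' : ∀ n, Fin (d n) → T}
    {l : ℕ → ℝ} {A B : ℕ → ℝ≥0∞} (hl : ∀ n, 0 < l n)
    (hA : ∀ n k, ∫⁻ s, ‖f (t n k) s‖ₑ ^ p₁ ∂m ≤ A n)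
    (hA' : ∀ n k, ∫⁻ s, ‖f (t' n k) s‖ₑ ^ p₁ ∂m ≤ A n)
    (hB : ∀ n k, ∫⁻ s, ‖f (t n k) s * f (t' n k) s‖ₑ ^ p₂ ∂m ≤ B n)
    (hsum : ∑' n, d n * (‖l n‖ₑ ^ (-(2 * p₁)) * A n ^ 2 + ‖l n‖ₑ ^ (-(2 * p₂)) * B n) ≠ ⊤) :
    ∀ᵐ ω ∂P, ∀ᶠ n in atTop, ∀ k, |X ω (t n k)| ≤ l n ∨ |X ω (t' n k)| ≤ l n := by
  let bad (n : ℕ) : Set Ω := {ω | ∃ k, l n < |X ω (t n k)| ∧ l n < |X ω (t' n k)|}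
  have hbad {r₀ : ℝ} (hr₀ : 0 < r₀) :
      P (limsup bad atTop) ≤ stableIntensity α m {e | |e.1| < r₀} := by
    obtain ⟨C, hC, hbound⟩ := h.exists_measure_lt_abs_and_lt_abs_le hα hα2 hp₁ hp₂ hr₀
    refine measure_limsup_le_of_biUnion_le (b := fun n => C * (d n
      * (‖l n‖ₑ ^ (-(2 * p₁)) * A n ^ 2 + ‖l n‖ₑ ^ (-(2 * p₂)) * B n))) ?_ fun F => ?_
    · rw [ENNReal.tsum_mul_left]
      exact ENNReal.mul_ne_top hC hsum
    · have hF := hbound (κ := Σ n : F, Fin (d n)) (t := fun k => t k.1 k.2)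
        (t' := fun k => t' k.1 k.2) (fun k => hl k.1) (fun k => hA k.1 k.2)
        (fun k => hA' k.1 k.2) fun k => hB k.1 k.2
      simp only [Fintype.sum_sigma, Finset.sum_const, Finset.card_univ, Fintype.card_fin,
        nsmul_eq_mul, mul_left_comm _ C] at hF
      rw [← Finset.sum_coe_sort F]
      refine (measure_mono fun ω hω => ?_).trans hF
      obtain ⟨n, hn, k, hk⟩ := mem_iUnion₂.1 hω
      exact ⟨⟨⟨n, hn⟩, k⟩, hk⟩
  have hzero : P (limsup bad atTop) ≤ 0 := ge_of_tendsto (tendsto_stableIntensity_abs_fst_lt hα)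
    (eventually_nhdsWithin_of_forall fun r₀ hr₀ => hbad hr₀)
  filter_upwards [measure_eq_zero_iff_ae_notMem.1 (nonpos_iff_eq_zero.1 hzero)] with ω hω
  rw [mem_limsup_iff_frequently_mem, not_frequently] at hω
  filter_upwards [hω] with n hn k
  by_contra! hk
  exact hn ⟨k, hk⟩

end HasSpectralRepresentation

end Chaining

section Modification

variable {S Ω T : Type*} [MeasurableSpace S] [MeasurableSpace Ω] {m : Measure S} {P : Measure Ω}
  [IsProbabilityMeasure P] {α : ℝ}

lemma ae_eq_zero_of_integral_cexp_eq_one {Z : Ω → ℝ} (hZ : AEMeasurable Z P)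
    (hZ_char : ∀ θ : ℝ, ∫ ω, Complex.exp (Complex.I * ((θ * Z ω : ℝ) : ℂ)) ∂P = 1) :
    ∀ᵐ ω ∂P, Z ω = 0 := by
  have := Measure.isProbabilityMeasure_map hZ
  have hdirac : P.map Z = Measure.dirac 0 := by
    refine Measure.ext_of_charFun (funext fun θ => ?_)
    rw [charFun_dirac, inner_zero_left, Complex.ofReal_zero, zero_mul, Complex.exp_zero,
      ← hZ_char θ, charFun_apply_real, integral_map hZ (by fun_prop)]
    simp only [Complex.ofReal_mul, mul_comm Complex.I]
  refine ae_of_ae_map (p := fun z => z = 0) hZ ?_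
  rw [hdirac, ae_dirac_eq]
  rfl

variable {X : Ω → T → ℝ} {f : T → S → ℝ}

lemma HasSpectralRepresentation.ae_eq_of_tendsto (h : HasSpectralRepresentation X α f m P)
    (hα : 0 < α) {l : Filter T} [l.NeBot] [l.IsCountablyGenerated] {t : T}
    (hf : Tendsto (fun a => ∫⁻ s, ‖f a s - f t s‖ₑ ^ α ∂m) l (𝓝 0)) {y : Ω → ℝ}
    (hy : ∀ᵐ ω ∂P, Tendsto (X ω) l (𝓝 (y ω))) : ∀ᵐ ω ∂P, y ω = X ω t := by
  have hX := h.measurable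
  have hy_meas : AEMeasurable y P :=
    aemeasurable_of_tendsto_metrizable_ae l (fun a => (hX a).aemeasurable) hy
  suffices hchar : ∀ θ : ℝ, ∫ ω, Complex.exp (Complex.I * ((θ * (y ω - X ω t) : ℝ) : ℂ)) ∂P = 1 by
    filter_upwards [ae_eq_zero_of_integral_cexp_eq_one (hy_meas.sub (hX t).aemeasurable) hchar]
      with ω hω using sub_eq_zero.1 hω
  intro θ
  have hexponent : Tendsto (fun a => ∫ s, |θ * (f a s - f t s)| ^ α ∂m) l (𝓝 0) := by
    have hkernel (a : T) : ∫ s, |θ * (f a s - f t s)| ^ α ∂m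
        = |θ| ^ α * (∫⁻ s, ‖f a s - f t s‖ₑ ^ α ∂m).toReal := by
      have hmeas : Measurable fun s => f a s - f t s :=
        (h.measurable_kernel a).sub (h.measurable_kernel t)
      rw [← lintegral_ofReal_abs_rpow _ hα.le, ← integral_eq_lintegral_of_nonneg_ae
        (ae_of_all _ fun s => by positivity) (hmeas.abs.pow_const α).aestronglyMeasurable,
        ← integral_const_mul]
      simp only [abs_mul, Real.mul_rpow (abs_nonneg _) (abs_nonneg _)]
    simp only [hkernel]
    simpa only [Function.comp_def, ENNReal.toReal_zero, mul_zero] using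
      ((ENNReal.tendsto_toReal ENNReal.zero_ne_top).comp hf).const_mul (|θ| ^ α)
  have hone : Tendsto (fun a => ∫ ω, Complex.exp (Complex.I * ((θ * (X ω a - X ω t) : ℝ) : ℂ)) ∂P)
      l (𝓝 1) := by
    have hcont : Continuous fun r : ℝ => Complex.exp (-(r : ℂ)) := by fun_prop
    have hexp := (hcont.tendsto 0).comp hexponent
    rw [Complex.ofReal_zero, neg_zero, Complex.exp_zero] at hexp
    exact hexp.congr fun a => (h.increments.integral_cexp_mul (t, a) θ).symm
  refine tendsto_nhds_unique ?_ hone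
  refine tendsto_integral_filter_of_dominated_convergence (fun _ => 1)
    (.of_forall fun a => by fun_prop) (.of_forall fun a => ae_of_all _ fun ω => ?_)
    (integrable_const _) ?_
  · rw [mul_comm, Complex.norm_exp_ofReal_mul_I]
  · filter_upwards [hy] with ω hω
    have hcont : Continuous fun r : ℝ => Complex.exp (Complex.I * ((θ * (r - X ω t) : ℝ) : ℂ)) := by
      fun_prop
    exact (hcont.tendsto (y ω)).comp hω

lemma HasSpectralRepresentation.ae_eq_zero (h : HasSpectralRepresentation X α f 0 P) (t : T) :
    ∀ᵐ ω ∂P, X ω t = 0 := by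
  refine ae_eq_zero_of_integral_cexp_eq_one (h.measurable t).aemeasurable fun θ => ?_
  rw [h.integral_cexp_mul, integral_zero_measure, Complex.ofReal_zero, neg_zero, Complex.exp_zero]

end Modification

section DyadicSums

lemma tsum_two_pow_mul_rpow_ne_top {β p γ : ℝ} (h : 2 * p * γ < 2 * β - 1) :
    ∑' n : ℕ, 2 ^ n * (‖((2⁻¹ : ℝ) ^ γ) ^ n‖ₑ ^ (-(2 * p)) * ((2⁻¹ : ℝ≥0∞) ^ n) ^ (2 * β)) ≠ ⊤ := by
  have henorm (n : ℕ) : ‖((2⁻¹ : ℝ) ^ γ) ^ n‖ₑ = (2 : ℝ≥0∞) ^ (-(γ * n)) := by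
    rw [enorm_pow, Real.enorm_of_nonneg (by positivity),
      ← ENNReal.ofReal_rpow_of_pos (by positivity), ENNReal.ofReal_inv_of_pos two_pos,
      ENNReal.ofReal_ofNat, ENNReal.inv_rpow, ← ENNReal.rpow_neg, ← ENNReal.rpow_natCast,
      ← ENNReal.rpow_mul, neg_mul]
  have hterm (n : ℕ) :
      2 ^ n * (‖((2⁻¹ : ℝ) ^ γ) ^ n‖ₑ ^ (-(2 * p)) * ((2⁻¹ : ℝ≥0∞) ^ n) ^ (2 * β))
        = ((2 : ℝ≥0∞) ^ (2 * p * γ - (2 * β - 1))) ^ n := by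
    rw [henorm, ← ENNReal.inv_pow, ENNReal.inv_rpow, ← ENNReal.rpow_neg, ← ENNReal.rpow_natCast,
      ← ENNReal.rpow_natCast, ← ENNReal.rpow_mul, ← ENNReal.rpow_mul, ← ENNReal.rpow_mul,
      ← ENNReal.rpow_add _ _ two_ne_zero ENNReal.ofNat_ne_top,
      ← ENNReal.rpow_add _ _ two_ne_zero ENNReal.ofNat_ne_top]
    congr 1
    ring
  simp only [hterm]
  refine (tsum_geometric_lt_top.2 ?_).ne
  exact ENNReal.rpow_lt_one_of_one_lt_of_neg ENNReal.one_lt_two (by linarith)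

lemma tsum_two_pow_mul_add_ne_top {β₁ β₂ p₁ p₂ γ : ℝ} {c : ℝ≥0∞} (hc : c ≠ ⊤)
    (hγ₁ : 2 * p₁ * γ < 2 * β₁ - 1) (hγ₂ : 2 * p₂ * γ < 2 * β₂ - 1) :
    ∑' n : ℕ, ((2 ^ n : ℕ) : ℝ≥0∞) * (‖((2⁻¹ : ℝ) ^ γ) ^ n‖ₑ ^ (-(2 * p₁))
        * (c * (2⁻¹ ^ n) ^ β₁) ^ 2
      + ‖((2⁻¹ : ℝ) ^ γ) ^ n‖ₑ ^ (-(2 * p₂)) * (c * (2⁻¹ ^ n) ^ (2 * β₂))) ≠ ⊤ := by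
  have hsplit (n : ℕ) (x y z w : ℝ≥0∞) : ((2 ^ n : ℕ) : ℝ≥0∞) * (x * (c * y ^ β₁) ^ 2 + z * (c * w))
      = c ^ 2 * (2 ^ n * (x * y ^ (2 * β₁))) + c * (2 ^ n * (z * w)) := by
    rw [mul_pow, ← ENNReal.rpow_mul_natCast, mul_comm β₁]
    push_cast
    ring
  rw [tsum_congr fun n => hsplit n _ _ _ _, ENNReal.tsum_add, ENNReal.tsum_mul_left,
    ENNReal.tsum_mul_left]
  exact ENNReal.add_ne_top.2
    ⟨ENNReal.mul_ne_top (ENNReal.pow_ne_top hc) (tsum_two_pow_mul_rpow_ne_top hγ₁),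
      ENNReal.mul_ne_top hc (tsum_two_pow_mul_rpow_ne_top hγ₂)⟩

end DyadicSums

section HolderKernel

variable {S Ω : Type*} [MeasurableSpace S] [MeasurableSpace Ω] {m : Measure S}
  [IsFiniteMeasure m] {P : Measure Ω} [IsProbabilityMeasure P] {X : Ω → unitInterval → ℝ}
  {f : unitInterval → S → ℝ} {α p₁ p₂ β₁ β₂ : ℝ} {c : ℝ≥0∞}

lemma tendsto_lintegral_enorm_sub_rpow (hα : 0 < α) (hp₁ : α ≤ p₁) (hβ₁ : 0 < β₁)
    (hf : ∀ t, Measurable (f t)) (hc : c ≠ ⊤)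
    (hB₁ : ∀ a b, a ≤ b → ∫⁻ s, ‖f b s - f a s‖ₑ ^ p₁ ∂m ≤ c * edist a b ^ β₁)
    (t : unitInterval) :
    Tendsto (fun a => ∫⁻ s, ‖f a s - f t s‖ₑ ^ α ∂m) (𝓝[>] t) (𝓝 0) := by
  have hexp : 0 < α / p₁ := div_pos hα (hα.trans_le hp₁)
  have hcont : Continuous fun a =>
      (c * edist t a ^ β₁) ^ (α / p₁) * m univ ^ (1 - α / p₁) := by
    have huniv : m univ ^ (1 - α / p₁) ≠ ⊤ := ENNReal.rpow_ne_top_of_nonneg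
      (sub_nonneg.2 ((div_le_one (hα.trans_le hp₁)).2 hp₁)) (measure_ne_top m univ)
    refine (ENNReal.continuous_mul_const huniv).comp (ENNReal.continuous_rpow_const.comp
      ((ENNReal.continuous_const_mul hc).comp (ENNReal.continuous_rpow_const.comp ?_)))
    fun_prop
  have hlim := (hcont.tendsto t).mono_left (nhdsWithin_le_nhds (s := Ioi t))
  rw [edist_self, ENNReal.zero_rpow_of_pos hβ₁, mul_zero, ENNReal.zero_rpow_of_pos hexp,
    zero_mul] at hlim
  refine tendsto_of_tendsto_of_tendsto_of_le_of_le' tendsto_const_nhds hlim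
    (.of_forall fun a => zero_le) ?_
  filter_upwards [self_mem_nhdsWithin] with a ha
  refine (lintegral_enorm_rpow_le_of_le ((hf a).sub (hf t)).aestronglyMeasurable hα hp₁).trans ?_
  gcongr
  exact hB₁ t a (le_of_lt ha)

namespace HasSpectralRepresentation

lemma ae_eventually_dyadicIncrementsLE [NeZero m] (h : HasSpectralRepresentation X α f m P)
    (hα : 0 < α) (hα2 : α < 2) (hp₁ : α < p₁) (hp₂ : α / 2 < p₂) (hβ₁ : 0 ≤ β₁) (hβ₂ : 0 ≤ β₂)
    (hc : c ≠ ⊤) (hB₁ : ∀ a b, a ≤ b → ∫⁻ s, ‖f b s - f a s‖ₑ ^ p₁ ∂m ≤ c * edist a b ^ β₁)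
    (hB₂ : ∀ a t b, a ≤ t → t ≤ b →
      ∫⁻ s, ‖(f t s - f a s) * (f b s - f t s)‖ₑ ^ p₂ ∂m ≤ c * edist a b ^ (2 * β₂))
    {γ : ℝ} (hγ₁ : 2 * p₁ * γ < 2 * β₁ - 1) (hγ₂ : 2 * p₂ * γ < 2 * β₂ - 1) :
    ∀ᵐ ω ∂P, ∀ᶠ n in atTop, DyadicIncrementsLE (X ω) n (((2⁻¹ : ℝ) ^ γ) ^ n) := by
  have hA (n k : ℕ) : ∫⁻ s, ‖f (dyadicPoint (n + 1) (k + 1)) s - f (dyadicPoint (n + 1) k) s‖ₑ ^ p₁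
      ∂m ≤ c * (2⁻¹ ^ n) ^ β₁ := by
    refine (hB₁ _ _ (dyadicPoint_mono _ (Nat.le_succ k))).trans ?_
    gcongr
    exact (edist_dyadicPoint_succ_le _ _).trans
      (pow_le_pow_right_of_le_one' (ENNReal.inv_le_one.2 one_le_two) n.le_succ)
  have hB (n k : ℕ) : ∫⁻ s, ‖(f (dyadicPoint (n + 1) (2 * k + 1)) s
        - f (dyadicPoint (n + 1) (2 * k)) s) * (f (dyadicPoint (n + 1) (2 * k + 2)) s
          - f (dyadicPoint (n + 1) (2 * k + 1)) s)‖ₑ ^ p₂ ∂m ≤ c * (2⁻¹ ^ n) ^ (2 * β₂) := by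
    refine (hB₂ _ _ _ (dyadicPoint_mono _ (by omega)) (dyadicPoint_mono _ (by omega))).trans ?_
    gcongr
    rw [show 2 * k + 2 = 2 * (k + 1) from rfl, dyadicPoint_succ_two_mul, dyadicPoint_succ_two_mul]
    exact edist_dyadicPoint_succ_le n k
  filter_upwards [h.increments.ae_eventually_forall_abs_le hα hα2 hp₁ hp₂ (d := fun n => 2 ^ n)
    (t := fun n k => (dyadicPoint (n + 1) (2 * k), dyadicPoint (n + 1) (2 * k + 1)))
    (t' := fun n k => (dyadicPoint (n + 1) (2 * k + 1), dyadicPoint (n + 1) (2 * k + 2)))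
    (fun n => by positivity) (fun n k => hA n _) (fun n k => hA n _) (fun n k => hB n _)
    (tsum_two_pow_mul_add_ne_top hc hγ₁ hγ₂)] with ω hω
  filter_upwards [hω] with n hn k
  rcases lt_or_ge k (2 ^ n) with hk | hk
  · exact (hn ⟨k, hk⟩).imp (fun h => by rwa [dist_comm, Real.dist_eq])
      fun h => by rwa [dist_comm, Real.dist_eq]
  · right
    rw [dyadicPoint_eq_one (k := 2 * k + 1) (by omega), dyadicPoint_eq_one (k := 2 * k + 2)
      (by omega), dist_self]
    positivity

theorem exists_cadlag_modification_of_lintegral_le_edist [NeZero m]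
    (h : HasSpectralRepresentation X α f m P) (hα : 0 < α) (hα2 : α < 2) (hp₁ : α < p₁)
    (hp₂ : α / 2 < p₂) (hβ₁ : 1 / 2 < β₁) (hβ₂ : 1 / 2 < β₂) (hc : c ≠ ⊤)
    (hB₁ : ∀ a b, a ≤ b → ∫⁻ s, ‖f b s - f a s‖ₑ ^ p₁ ∂m ≤ c * edist a b ^ β₁)
    (hB₂ : ∀ a t b, a ≤ t → t ≤ b →
      ∫⁻ s, ‖(f t s - f a s) * (f b s - f t s)‖ₑ ^ p₂ ∂m ≤ c * edist a b ^ (2 * β₂)) :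
    ∃ Y : Ω → unitInterval → ℝ, (∀ ω, Cadlag (Y ω)) ∧ ∀ t, ∀ᵐ ω ∂P, Y ω t = X ω t := by
  have hp₁_pos : 0 < 2 * p₁ := by linarith
  have hp₂_pos : 0 < 2 * p₂ := by linarith
  obtain ⟨γ, hγ, hγ_lt⟩ := exists_between
    (lt_min (div_pos (show 0 < 2 * β₁ - 1 by linarith) hp₁_pos)
      (div_pos (show 0 < 2 * β₂ - 1 by linarith) hp₂_pos))
  obtain ⟨hγ₁, hγ₂⟩ := lt_min_iff.1 hγ_lt
  have hb : Summable fun n => ((2⁻¹ : ℝ) ^ γ) ^ n := summable_geometric_of_lt_one (by positivity)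
    (Real.rpow_lt_one (by positivity) (by norm_num) hγ)
  have hdyadic := h.ae_eventually_dyadicIncrementsLE hα hα2 hp₁ hp₂ (by linarith)
    (by linarith) hc hB₁ hB₂ ((lt_div_iff₀' hp₁_pos).1 hγ₁) ((lt_div_iff₀' hp₂_pos).1 hγ₂)
  have hextend (ω : Ω) : ∃ y : unitInterval → ℝ, Cadlag y ∧
      ((∀ᶠ n in atTop, DyadicIncrementsLE (X ω) n (((2⁻¹ : ℝ) ^ γ) ^ n)) →
        y 1 = X ω 1 ∧ ∀ t < 1, Tendsto (X ω) (𝓝[dyadics ∩ Ioi t] t) (𝓝 (y t))) := by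
    by_cases hω : ∀ᶠ n in atTop, DyadicIncrementsLE (X ω) n (((2⁻¹ : ℝ) ^ γ) ^ n)
    · obtain ⟨y, hy, hyX⟩ := exists_cadlag_extension_of_summable hb hω
      exact ⟨y, hy, fun _ => hyX⟩
    · exact ⟨_, cadlag_const 0, fun h => absurd h hω⟩
  choose Y hY hYX using hextend
  refine ⟨Y, hY, fun t => ?_⟩
  rcases eq_or_lt_of_le (show t ≤ 1 from t.2.2) with rfl | ht
  · filter_upwards [hdyadic] with ω hω using (hYX ω hω).1
  · have := nhdsWithin_dyadics_inter_Ioi_neBot ht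
    refine h.ae_eq_of_tendsto hα (l := 𝓝[dyadics ∩ Ioi t] t)
      ((tendsto_lintegral_enorm_sub_rpow hα hp₁.le (by linarith)
        h.measurable_kernel hc hB₁ t).mono_left (nhdsWithin_mono t inter_subset_right)) ?_
    filter_upwards [hdyadic] with ω hω using (hYX ω hω).2 t ht

end HasSpectralRepresentation

end HolderKernel

section TimeChange

lemma abs_sub_le_abs_add_sub_add {ι : Type*} [LinearOrder ι] {F H : ι → ℝ} (hF : Monotone F)
    (hH : Monotone H) (a b : ι) : |F a - F b| ≤ |F a + H a - (F b + H b)| := by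
  rcases le_total a b with hab | hba
  · rw [abs_of_nonpos, abs_of_nonpos] <;> linarith [hF hab, hH hab]
  · rw [abs_of_nonneg, abs_of_nonneg] <;> linarith [hF hba, hH hba]

lemma exists_orderIso_sub_eq_mul {G : unitInterval → ℝ} (hG : StrictMono G) (hGc : Continuous G) :
    ∃ ψ : unitInterval ≃o unitInterval, ∀ t, G t - G 0 = (G 1 - G 0) * ψ t := by
  have hpos : 0 < G 1 - G 0 := sub_pos.2 (hG zero_lt_one)
  let g (t : unitInterval) : unitInterval := ⟨(G t - G 0) / (G 1 - G 0),
    div_nonneg (sub_nonneg.2 (hG.monotone unitInterval.nonneg')) hpos.le,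
    (div_le_one hpos).2 (sub_le_sub_right (hG.monotone unitInterval.le_one') _)⟩
  have hg : StrictMono g := fun a b hab =>
    div_lt_div_of_pos_right (sub_lt_sub_right (hG hab) _) hpos
  have hgc : Continuous g := Continuous.subtype_mk (by fun_prop) _
  have hg0 : g 0 = 0 := Subtype.ext (by simp only [g, sub_self, zero_div, Icc.coe_zero])
  have hg1 : g 1 = 1 := Subtype.ext (by simp only [g, div_self hpos.ne', Icc.coe_one])
  have hsurj : Function.Surjective g := fun y => mem_range_of_exists_le_of_exists_ge hgc
    ⟨0, hg0.trans_le unitInterval.nonneg'⟩ ⟨1, unitInterval.le_one'.trans_eq hg1.symm⟩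
  exact ⟨hg.orderIsoOfSurjective g hsurj, fun t => (mul_div_cancel₀ _ hpos.ne').symm⟩

lemma exists_orderIso_lipschitzWith_comp {F₁ F₂ : unitInterval → ℝ} (hF₁ : Monotone F₁)
    (hF₁c : Continuous F₁) (hF₂ : Monotone F₂) (hF₂c : Continuous F₂) :
    ∃ (ψ : unitInterval ≃o unitInterval) (K : NNReal),
      LipschitzWith K (F₁ ∘ ψ) ∧ LipschitzWith K (F₂ ∘ ψ) := by
  let G (t : unitInterval) : ℝ := F₁ t + (F₂ t + t)
  have hG : StrictMono G := hF₁.add_strictMono (hF₂.add_strictMono (Subtype.strictMono_coe _))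
  obtain ⟨φ, hφ⟩ := exists_orderIso_sub_eq_mul hG (by fun_prop)
  have hpos : 0 < G 1 - G 0 := sub_pos.2 (hG zero_lt_one)
  have hdist (a b : unitInterval) :
      |G (φ.symm a) - G (φ.symm b)| = (G 1 - G 0).toNNReal * dist a b := by
    rw [← sub_sub_sub_cancel_right _ _ (G 0), hφ (φ.symm a), hφ (φ.symm b), φ.apply_symm_apply,
      φ.apply_symm_apply, ← mul_sub, abs_mul, abs_of_pos hpos, Real.coe_toNNReal _ hpos.le,
      Subtype.dist_eq, Real.dist_eq]
  refine ⟨φ.symm, (G 1 - G 0).toNNReal, .of_dist_le_mul fun a b => ?_,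
    .of_dist_le_mul fun a b => ?_⟩
  · rw [← hdist]
    exact abs_sub_le_abs_add_sub_add hF₁ (hF₂.add (Subtype.mono_coe _)) _ _
  · rw [← hdist]
    simp only [G, add_left_comm (F₁ _)]
    exact abs_sub_le_abs_add_sub_add hF₂ (hF₁.add (Subtype.mono_coe _)) _ _

lemma ofReal_abs_sub_rpow_le_of_lipschitzWith {ι : Type*} [PseudoEMetricSpace ι] {F : ι → ℝ}
    {K : NNReal} (hF : LipschitzWith K F) {β : ℝ} (hβ : 0 ≤ β) (a b : ι) :
    ENNReal.ofReal (|F b - F a| ^ β) ≤ (K : ℝ≥0∞) ^ β * edist a b ^ β := by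
  rw [← ENNReal.ofReal_rpow_of_nonneg (abs_nonneg _) hβ, ← Real.dist_eq, ← edist_dist,
    ← ENNReal.mul_rpow_of_nonneg _ _ hβ, edist_comm a]
  gcongr
  exact hF b a

end TimeChange

theorem stable_cadlag_modification_general {S Ω : Type*} [MeasurableSpace S] [MeasurableSpace Ω]
    {m : Measure S} [IsFiniteMeasure m] {P : Measure Ω} [IsProbabilityMeasure P]
    {X : Ω → unitInterval → ℝ} {f : unitInterval → S → ℝ} {α β₁ β₂ p₁ p₂ : ℝ}
    (h : HasSpectralRepresentation X α f m P) (hα : 0 < α) (hα2 : α < 2)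
    (hβ₁ : 1 / 2 < β₁) (hβ₂ : 1 / 2 < β₂) (hp₁ : α < p₁) (hp₂ : α / 2 < p₂)
    {F₁ F₂ : unitInterval → ℝ} (hF₁ : Monotone F₁) (hF₁c : Continuous F₁)
    (hF₂ : Monotone F₂) (hF₂c : Continuous F₂)
    (hB₁ : ∀ t₁ t₂, t₁ ≤ t₂ → ∫⁻ s, ENNReal.ofReal (|f t₂ s - f t₁ s| ^ p₁) ∂m
      ≤ ENNReal.ofReal (|F₁ t₂ - F₁ t₁| ^ β₁))
    (hB₂ : ∀ t₁ t t₂, t₁ ≤ t → t ≤ t₂ →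
      ∫⁻ s, ENNReal.ofReal (|(f t s - f t₁ s) * (f t₂ s - f t s)| ^ p₂) ∂m
        ≤ ENNReal.ofReal (|F₂ t₂ - F₂ t₁| ^ (2 * β₂))) :
    ∃ X' : Ω → unitInterval → ℝ,
      (∀ ω, Cadlag (X' ω)) ∧ ∀ t, ∀ᵐ ω ∂P, X' ω t = X ω t := by
  rcases eq_zero_or_neZero m with rfl | _
  · refine ⟨fun _ _ => 0, fun _ => cadlag_const 0, fun t => ?_⟩
    filter_upwards [h.ae_eq_zero t] with ω hω using hω.symm
  obtain ⟨ψ, K, hK₁, hK₂⟩ := exists_orderIso_lipschitzWith_comp hF₁ hF₁c hF₂ hF₂c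
  have hK_rpow {β : ℝ} (hβ : 0 ≤ β) : (K : ℝ≥0∞) ^ β ≠ ⊤ :=
    ENNReal.rpow_ne_top_of_nonneg hβ ENNReal.coe_ne_top
  obtain ⟨Y, hY, hYX⟩ := (h.comp ψ).exists_cadlag_modification_of_lintegral_le_edist hα hα2 hp₁ hp₂
    hβ₁ hβ₂ (c := max (K ^ β₁) (K ^ (2 * β₂)))
    (max_ne_top (hK_rpow (by linarith)) (hK_rpow (by linarith)))
    (fun a b hab => by
      rw [← lintegral_ofReal_abs_rpow _ (by linarith)]
      refine ((hB₁ _ _ (ψ.monotone hab)).trans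
        (ofReal_abs_sub_rpow_le_of_lipschitzWith hK₁ (by linarith) a b)).trans ?_
      gcongr
      exact le_max_left _ _)
    (fun a t b hat htb => by
      rw [← lintegral_ofReal_abs_rpow _ (by linarith)]
      refine ((hB₂ _ _ _ (ψ.monotone hat) (ψ.monotone htb)).trans
        (ofReal_abs_sub_rpow_le_of_lipschitzWith hK₂ (by linarith) a b)).trans ?_
      gcongr
      exact le_max_right _ _)
  refine ⟨fun ω => Y ω ∘ ψ.symm, fun ω => (hY ω).comp_orderIso ψ.symm, fun t => ?_⟩
  filter_upwards [hYX (ψ.symm t)] with ω hω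
  rw [Function.comp_apply, hω, ψ.apply_symm_apply]

/-- **Theorem 3 (càdlàg modifications of symmetric stable processes).** Let `α ∈ (1,2)` and
let `X` be a symmetric `α`-stable process with spectral representation `(f,m)`. If there
are `β₁, β₂ > 1/2`, `p₁ > α`, `p₂ > α/2` and increasing continuous `F₁, F₂` such that for
all `t₁ ≤ t ≤ t₂` in `[0,1]`,
`∫ |f(t₂,s) − f(t₁,s)|^{p₁} dm ≤ |F₁ t₂ − F₁ t₁|^{β₁}` and
`∫ |(f(t,s) − f(t₁,s))(f(t₂,s) − f(t,s))|^{p₂} dm ≤ |F₂ t₂ − F₂ t₁|^{2β₂}`,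
then `X` has a modification all of whose sample paths are càdlàg. -/
theorem stable_cadlag_modification
    {S : Type*} [MeasurableSpace S] (m : Measure S) [IsFiniteMeasure m]
    {Ω : Type*} [MeasurableSpace Ω] (P : Measure Ω) [IsProbabilityMeasure P]
    (α : ℝ) (hα1 : 1 < α) (hα2 : α < 2)
    -- the spectral kernel `f`, with `f(t,·) ∈ L^α(S,m)`
    (f : unitInterval → S → ℝ)
    (hfmeas : ∀ t, Measurable (f t))
    (hfLα : ∀ t, ∫⁻ s, ENNReal.ofReal (|f t s| ^ α) ∂m < ⊤)
    -- the symmetric `α`-stable process `X` with spectral representation `(f,m)`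
    (X : Ω → unitInterval → ℝ)
    (hXmeas : ∀ t, Measurable fun ω => X ω t)
    (hXstable : ∀ (n : ℕ) (t : Fin n → unitInterval) (θ : Fin n → ℝ),
      ∫ ω, Complex.exp (Complex.I * ((∑ k, θ k * X ω (t k) : ℝ) : ℂ)) ∂P
        = Complex.exp (-(((∫ s, |∑ k, θ k * f (t k) s| ^ α ∂m : ℝ)) : ℂ)))
    -- the regularity assumptions
    (β₁ β₂ p₁ p₂ : ℝ) (hβ₁ : 1/2 < β₁) (hβ₂ : 1/2 < β₂)
    (hp₁ : α < p₁) (hp₂ : α/2 < p₂)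
    (F₁ F₂ : unitInterval → ℝ)
    (hF₁ : Monotone F₁) (hF₁c : Continuous F₁)
    (hF₂ : Monotone F₂) (hF₂c : Continuous F₂)
    (hB1 : ∀ t₁ t₂ : unitInterval, t₁ ≤ t₂ →
      ∫⁻ s, ENNReal.ofReal (|f t₂ s - f t₁ s| ^ p₁) ∂m
        ≤ ENNReal.ofReal (|F₁ t₂ - F₁ t₁| ^ β₁))
    (hB2 : ∀ t₁ t t₂ : unitInterval, t₁ ≤ t → t ≤ t₂ →
      ∫⁻ s, ENNReal.ofReal (|(f t s - f t₁ s) * (f t₂ s - f t s)| ^ p₂) ∂m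
        ≤ ENNReal.ofReal (|F₂ t₂ - F₂ t₁| ^ (2 * β₂))) :
    ∃ X' : Ω → unitInterval → ℝ,
      (∀ ω, Cadlag (X' ω)) ∧ ∀ t : unitInterval, ∀ᵐ ω ∂P, X' ω t = X ω t := by
  have hα : 0 < α := zero_lt_one.trans hα1
  exact stable_cadlag_modification_general ⟨hfmeas, fun t => (memLp_ofReal_iff (hfmeas t) hα).2
    (lintegral_ofReal_abs_rpow (f t) hα.le ▸ hfLα t), hXmeas, hXstable⟩
    hα hα2 hβ₁ hβ₂ hp₁ hp₂ hF₁ hF₁c hF₂ hF₂c hB1 hB2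

end
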